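/- Let p be a prime and n ≥ 1. Let M be an analytic submanifold of ℚ_p^n. If some point y₀ ∈ M is not very well approximable (i.e., w(y₀) = n+1), then the set of not very well approximable points of M has positive measure with respect to the smooth measure class on M. -/

import Mathlib

open MeasureTheory Metric
open scoped ENNReal NNReal

namespace PadicDioph

variable (p : ℕ) [Fact p.Prime]

noncomputable instance : MeasurableSpace ℚ_[p] := borel _
instance : BorelSpace ℚ_[p] := ⟨rfl⟩

/-- Membership in `ℤ[1/p]`, viewed inside `ℚ`. -/
def IsZInvP (q : ℚ) : Prop := ∃ (z : ℤ) (k : ℕ), q = (z : ℚ) / (p : ℚ) ^ k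

/-- Sup norm (max of archimedean absolute values) of a finite tuple of rationals. -/
noncomputable def supNormR {m : ℕ} (q : Fin m → ℚ) : ℝ := ⨆ i, |(q i : ℝ)|

/-- Sup of the `p`-adic absolute values of a finite tuple of rationals. -/
noncomputable def supNormP {m : ℕ} (q : Fin m → ℚ) : ℝ := ⨆ i, ‖((q i : ℚ_[p]))‖

/-- Sup norm of an integer tuple together with an extra integer coordinate. -/
noncomputable def supNormZ {n : ℕ} (q0 : ℤ) (q : Fin n → ℤ) : ℝ :=
  max |(q0 : ℝ)| (⨆ i, |((q i : ℤ) : ℝ)|)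

/-- The classical Diophantine exponent `w(y)` of `y ∈ ℚ_p^n`: the supremum of all `v > 0`
such that `|q₀ + q·y|_p ≤ ‖(q₀,q)‖_∞^{-v}` has infinitely many integer solutions. -/
noncomputable def wExp {n : ℕ} (y : Fin n → ℚ_[p]) : ℝ≥0∞ :=
  ⨆ (v : ℝ) (_ : 0 < v ∧
    {qq : ℤ × (Fin n → ℤ) |
      ‖((qq.1 : ℚ_[p]) + ∑ i, (qq.2 i : ℚ_[p]) * y i)‖ ≤
        (supNormZ qq.1 qq.2) ^ (-v)}.Infinite), ENNReal.ofReal v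

/-- `y` is very well approximable if `w(y) > n + 1`. -/
def IsVWA {n : ℕ} (y : Fin n → ℚ_[p]) : Prop :=
  ENNReal.ofReal ((n : ℝ) + 1) < wExp p y

/-- The defining condition of the exponent `w_p`: there are solutions
`q̃ = (q₀, q) ∈ ℤ[1/p]^{n+1}` of `|q·y + q₀|_p < (‖q‖_p ‖q̃‖_∞)^{-v} ‖q̃‖_∞^{-1}`
with `‖q‖_p ‖q̃‖_∞` arbitrarily large. -/
def WpCond {n : ℕ} (y : Fin n → ℚ_[p]) (v : ℝ) : Prop :=
  ∀ T : ℝ, ∃ (q0 : ℚ) (q : Fin n → ℚ),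
    IsZInvP p q0 ∧ (∀ i, IsZInvP p (q i)) ∧
    T < supNormP p q * supNormR (Fin.cons q0 q) ∧
    ‖(∑ i, (q i : ℚ_[p]) * y i) + (q0 : ℚ_[p])‖ <
      (supNormP p q * supNormR (Fin.cons q0 q)) ^ (-v) * (supNormR (Fin.cons q0 q))⁻¹

/-- The exponent `w_p(y)`. -/
noncomputable def wpExp {n : ℕ} (y : Fin n → ℚ_[p]) : ℝ≥0∞ :=
  ⨆ (v : ℝ) (_ : 0 < v ∧ WpCond p y v), ENNReal.ofReal v

/-- `Π_+` of a tuple of rationals: the product of `|q_i|_∞` over the nonzero coordinates. -/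
noncomputable def piPlusQ {m : ℕ} (q : Fin m → ℚ) : ℝ :=
  ∏ i, (if q i = 0 then 1 else |(q i : ℝ)|)

/-- `Π_+` of `(q₀, q)` with integer coordinates. -/
noncomputable def piPlusZ {n : ℕ} (q0 : ℤ) (q : Fin n → ℤ) : ℝ :=
  (if q0 = 0 then 1 else |(q0 : ℝ)|) * ∏ i, (if q i = 0 then 1 else |((q i : ℤ) : ℝ)|)

/-- `y ∈ ℚ_p^n` is very well multiplicatively approximable. -/
def IsVWMA {n : ℕ} (y : Fin n → ℚ_[p]) : Prop :=
  ∃ ε : ℝ, 0 < ε ∧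
    {qq : ℤ × (Fin n → ℤ) |
      ‖((qq.1 : ℚ_[p]) + ∑ i, (qq.2 i : ℚ_[p]) * y i)‖ ≤
        (piPlusZ qq.1 qq.2) ^ (-(1 + ε))}.Infinite

/-- A measure on `ℚ_p^n` is strongly extremal if almost every point is not VWMA. -/
def StronglyExtremal {n : ℕ} (μ : Measure (Fin n → ℚ_[p])) : Prop :=
  ∀ᵐ y ∂μ, ¬ IsVWMA p y

/-- `δ(g_t u_y D^{n+1})` for the one-parameter flow: `g_t` has `p`-adic component
`diag(p^{-t},1,…,1)` and archimedean component `p^{-t/(n+1)}·Id`. -/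
noncomputable def deltaOne {n : ℕ} (y : Fin n → ℚ_[p]) (t : ℕ) : ℝ :=
  sInf { c : ℝ | ∃ qt : Fin (n + 1) → ℚ, (∀ i, IsZInvP p (qt i)) ∧ qt ≠ 0 ∧
    c = ((p : ℝ) ^ (-(t : ℝ) / ((n : ℝ) + 1)) * supNormR qt) *
        max (‖(((p : ℚ_[p]) ^ t)⁻¹ * ((qt 0 : ℚ_[p]) + ∑ i : Fin n, (qt i.succ : ℚ_[p]) * y i))‖)
            (⨆ i : Fin n, ‖((qt i.succ : ℚ_[p]))‖) }

/-- The exponent `γ(y)`. -/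
noncomputable def gammaExp {n : ℕ} (y : Fin n → ℚ_[p]) : ℝ :=
  sSup {c : ℝ | 0 ≤ c ∧ ∀ N : ℕ, ∃ t : ℕ, N ≤ t ∧
    deltaOne p y t ≤ (p : ℝ) ^ (-(c * (t : ℝ)))}

/-- `δ(g_t u_y D^{n+1})` for the multiparameter flow: for `t = (t₀,…,t_n)` with
`T = Σ tᵢ`, the `p`-adic component of `g_t` is `diag(p^{-T},1,…,1)` and the archimedean
component is `diag(p^{-t₀},…,p^{-t_n})`. -/
noncomputable def deltaMulti {n : ℕ} (y : Fin n → ℚ_[p]) (t : Fin (n + 1) → ℕ) : ℝ :=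
  sInf { c : ℝ | ∃ qt : Fin (n + 1) → ℚ, (∀ i, IsZInvP p (qt i)) ∧ qt ≠ 0 ∧
    c = (⨆ i, (p : ℝ) ^ (-((t i : ℝ))) * |(qt i : ℝ)|) *
        max (‖(((p : ℚ_[p]) ^ (∑ i, t i))⁻¹ *
              ((qt 0 : ℚ_[p]) + ∑ i : Fin n, (qt i.succ : ℚ_[p]) * y i))‖)
            (⨆ i : Fin n, ‖((qt i.succ : ℚ_[p]))‖) }

/-- The support of a measure on a metric space. -/
def measSupp {X : Type*} [MetricSpace X] [MeasurableSpace X] (μ : Measure X) : Set X :=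
  {x | ∀ r : ℝ, 0 < r → 0 < μ (ball x r)}

/-- `‖f‖_{μ,B}`. -/
noncomputable def muSupNorm {X : Type*} [MetricSpace X] [MeasurableSpace X]
    (μ : Measure X) (B : Set X) (f : X → ℚ_[p]) : ℝ :=
  sSup {c : ℝ | 0 < μ {x ∈ B | c < ‖f x‖}}

/-- `f` is `(C, α)`-good on `V` with respect to `μ`. -/
def IsGoodOn {X : Type*} [MetricSpace X] [MeasurableSpace X] (μ : Measure X)
    (C a : ℝ) (V : Set X) (f : X → ℚ_[p]) : Prop :=
  ∀ (x₀ : X) (r : ℝ), 0 < r → x₀ ∈ measSupp μ → ball x₀ r ⊆ V →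
    ∀ ε : ℝ, 0 < ε →
      μ {x ∈ ball x₀ r | ‖f x‖ < ε} ≤
        ENNReal.ofReal (C * (ε / muSupNorm p μ (ball x₀ r) f) ^ a) * μ (ball x₀ r)

/-- A metric space is Besicovitch: any family of balls whose centers exhaust a bounded
set `A` admits a countable subfamily covering `A` with multiplicity at most `N`. -/
def IsBesicovitch (X : Type*) [MetricSpace X] : Prop :=
  ∃ N : ℕ, ∀ (A : Set X), Bornology.IsBounded A →
    ∀ F : Set (X × ℝ), (∀ b ∈ F, 0 < b.2) → (∀ x ∈ A, ∃ r : ℝ, (x, r) ∈ F) →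
      ∃ S ⊆ F, S.Countable ∧ (∀ x ∈ A, ∃ b ∈ S, x ∈ ball b.1 b.2) ∧
        ∀ x : X, {b ∈ S | x ∈ ball b.1 b.2}.encard ≤ N

/-- `μ` is `D`-Federer on the open set `U`. -/
def IsDFedererOn {X : Type*} [MetricSpace X] [MeasurableSpace X]
    (μ : Measure X) (D : ℝ) (U : Set X) : Prop :=
  ∀ x ∈ measSupp μ, ∀ r : ℝ, 0 < r → ball x (3 * r) ⊆ U →
    μ (ball x (3 * r)) ≤ ENNReal.ofReal D * μ (ball x r)

/-- `μ` is Federer. -/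
def IsFederer {X : Type*} [MetricSpace X] [MeasurableSpace X] (μ : Measure X) : Prop :=
  ∀ᵐ x ∂μ, ∃ U : Set X, IsOpen U ∧ x ∈ U ∧ 0 < μ U ∧ ∃ D : ℝ, 0 < D ∧ IsDFedererOn μ D U

/-- The pair `(f, μ)` is good: `μ`-a.e. point has a neighbourhood `V` and `C, α > 0`
such that every affine combination `c₀ + Σ cᵢ fᵢ` is `(C, α)`-good on `V` w.r.t. `μ`. -/
def GoodPair {X : Type*} [MetricSpace X] [MeasurableSpace X] {n : ℕ}
    (f : X → (Fin n → ℚ_[p])) (μ : Measure X) : Prop :=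
  ∀ᵐ x ∂μ, ∃ V : Set X, IsOpen V ∧ x ∈ V ∧ ∃ C a : ℝ, 0 < C ∧ 0 < a ∧
    ∀ c0 : ℚ_[p], ∀ c : Fin n → ℚ_[p],
      IsGoodOn p μ C a V (fun x => c0 + ∑ i, c i * f x i)

/-- `(f, μ)` is nonplanar in the affine subspace `L`. -/
def NonplanarIn {X : Type*} [MetricSpace X] [MeasurableSpace X] {n : ℕ}
    (f : X → (Fin n → ℚ_[p])) (μ : Measure X)
    (L : AffineSubspace ℚ_[p] (Fin n → ℚ_[p])) : Prop :=
  ∀ B : Set X, IsOpen B → B.Nonempty → 0 < μ B →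
    affineSpan ℚ_[p] (f '' (B ∩ measSupp μ)) = L

/-- `f` is nondegenerate in the affine subspace `L` at `x`: `f` takes values in `L` and the
span of the partial derivatives of `f` at `x` up to some order is the linear part of `L`. -/
def NondegenerateAt {d n : ℕ} (f : (Fin d → ℚ_[p]) → (Fin n → ℚ_[p]))
    (L : AffineSubspace ℚ_[p] (Fin n → ℚ_[p])) (x : Fin d → ℚ_[p]) : Prop :=
  (∀ u, f u ∈ L) ∧ ∃ m : ℕ,
    Submodule.span ℚ_[p]
      {v : Fin n → ℚ_[p] | ∃ j : ℕ, j ≤ m ∧ 1 ≤ j ∧ ∃ vs : Fin j → (Fin d → ℚ_[p]),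
        v = iteratedFDeriv ℚ_[p] j f x vs} = L.direction

/-- An analytic chart of the `d`-dimensional submanifold `M` of `ℚ_p^n`: an analytic map
`f` on an open set `U`, injective on `U`, immersive, a homeomorphism onto its image, whose
image is a relatively open subset of `M`. -/
def IsChart (d n : ℕ) (M : Set (Fin n → ℚ_[p]))
    (U : Set (Fin d → ℚ_[p])) (f : (Fin d → ℚ_[p]) → (Fin n → ℚ_[p])) : Prop :=
  IsOpen U ∧ AnalyticOnNhd ℚ_[p] f U ∧ Set.InjOn f U ∧
  (∀ x ∈ U, Function.Injective (fderiv ℚ_[p] f x)) ∧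
  (∀ x ∈ U, ∀ V : Set (Fin d → ℚ_[p]), IsOpen V → x ∈ V →
      ∃ W : Set (Fin n → ℚ_[p]), IsOpen W ∧ f x ∈ W ∧ W ∩ f '' U ⊆ f '' (V ∩ U)) ∧
  ∃ W : Set (Fin n → ℚ_[p]), IsOpen W ∧ M ∩ W = f '' U

/-- `M` is a `d`-dimensional analytic submanifold of `ℚ_p^n`. -/
def IsAnalyticSubmanifold (d n : ℕ) (M : Set (Fin n → ℚ_[p])) : Prop :=
  M.Nonempty ∧ ∀ y ∈ M, ∃ (U : Set (Fin d → ℚ_[p])) (f : (Fin d → ℚ_[p]) → (Fin n → ℚ_[p])),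
    IsChart p d n M U f ∧ y ∈ f '' U

/-!
Let `f` be analytic near `x₀` with `f x₀` not very well approximable. Restrict `f` to the lines
`s ↦ f (x₀ + s • v)`, `‖s‖ ≤ 1`, through `x₀`. The linear combinations of the coordinates of such a
curve are power series with uniformly few zeros, so their sublevel sets in every ball are small.
The Kleinbock–Margulis induction over chains of saturated sublattices of `ℤ ^ (n + 1)`, applied to
the curve `Y s = p ^ (-t) • (1, f (x₀ + s • v))`, turns this into a bound on the measure of those
`s` for which some short nonzero `q` satisfies `‖q₀ Y₀ + ⋯ + qₙ Yₙ‖ ≤ 1`. Here the covolume of a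
sublattice with basis `b` is replaced by the product of the norm of its Plücker vector and
`max 1 ‖b Y‖`; by Minkowski's theorem this weight is bounded below at `s = 0`, because `f x₀` is not
very well approximable.

The resulting bounds are summable over `t`, so by Borel–Cantelli almost every point of every line
segment through `x₀` is not very well approximable. Fubini's theorem exchanges the order of the
quantifiers: for almost every `s` with `‖s‖ = 1`, the point `x₀ + s • v` is good for almost
every `v`, and dilation by `s` preserves null sets.
-/

section

variable {p}

section PadicBalls

lemma one_lt_natCast_prime : (1 : ℝ) < p := by exact_mod_cast (Fact.out : p.Prime).one_lt

lemma natCast_prime_pos : (0 : ℝ) < p := one_pos.trans one_lt_natCast_prime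

/-- The closed ball of `ℚ_p` with centre `a` and radius `p⁻ᵐ`; indexing balls by their level `m`
makes subdivision into `p` balls of the next level an operation on indices. -/
def padicBall (a : ℚ_[p]) (m : ℕ) : Set ℚ_[p] := closedBall a ((p : ℝ)⁻¹ ^ m)

lemma mem_padicBall {a x : ℚ_[p]} {m : ℕ} : x ∈ padicBall a m ↔ ‖x - a‖ ≤ (p : ℝ)⁻¹ ^ m :=
  mem_closedBall_iff_norm

lemma mem_padicBall_self (a : ℚ_[p]) (m : ℕ) : a ∈ padicBall a m :=
  mem_closedBall_self (by positivity)

lemma padicBall_zero_right (a : ℚ_[p]) : padicBall a 0 = closedBall a 1 := by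
  rw [padicBall, pow_zero]

lemma padicBall_eq_of_mem {a x : ℚ_[p]} {m : ℕ} (hx : x ∈ padicBall a m) :
    padicBall x m = padicBall a m :=
  (IsUltrametricDist.closedBall_eq_of_mem hx).symm

lemma padicBall_subset {a b : ℚ_[p]} {m m' : ℕ} (hb : b ∈ padicBall a m) (hm : m ≤ m') :
    padicBall b m' ⊆ padicBall a m := by
  rw [← padicBall_eq_of_mem hb]
  exact closedBall_subset_closedBall <| pow_le_pow_of_le_one
    (by positivity) (inv_le_one_of_one_le₀ one_lt_natCast_prime.le) hm

lemma norm_le_one_of_mem_padicBall {a x : ℚ_[p]} {m : ℕ} (ha : ‖a‖ ≤ 1)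
    (hx : x ∈ padicBall a m) : ‖x‖ ≤ 1 := by
  have ha' : a ∈ padicBall (0 : ℚ_[p]) 0 := by rwa [padicBall_zero_right, mem_closedBall_zero_iff]
  simpa only [padicBall_zero_right, mem_closedBall_zero_iff] using
    padicBall_subset ha' m.zero_le hx

lemma measurableSet_padicBall (a : ℚ_[p]) (m : ℕ) : MeasurableSet (padicBall a m) :=
  isClosed_closedBall.measurableSet

lemma add_pow_mul_natCast_mem_padicBall (a : ℚ_[p]) (m i : ℕ) :
    a + (p : ℚ_[p]) ^ m * (i : ℚ_[p]) ∈ padicBall a m := by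
  rw [mem_padicBall, add_sub_cancel_left, norm_mul, norm_pow, Padic.norm_p]
  exact mul_le_of_le_one_right (by positivity) (mod_cast Padic.norm_int_le_one (p := p) i)

lemma existsUnique_mem_padicBall_succ {a x : ℚ_[p]} {m : ℕ} (hx : x ∈ padicBall a m) :
    ∃! i : ℕ, i < p ∧ x ∈ padicBall (a + (p : ℚ_[p]) ^ m * (i : ℚ_[p])) (m + 1) := by
  have hp : (p : ℚ_[p]) ≠ 0 := mod_cast (Fact.out : p.Prime).ne_zero
  have hp' : (0 : ℝ) < (p : ℝ)⁻¹ ^ m := by have := natCast_prime_pos (p := p); positivity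
  have hz : ‖(x - a) / (p : ℚ_[p]) ^ m‖ ≤ 1 := by
    rw [norm_div, norm_pow, Padic.norm_p, div_le_one hp']
    exact mem_padicBall.1 hx
  let z : ℤ_[p] := ⟨_, hz⟩
  have mem_iff (i : ℕ) : x ∈ padicBall (a + (p : ℚ_[p]) ^ m * (i : ℚ_[p])) (m + 1) ↔
      z - i ∈ IsLocalRing.maximalIdeal ℤ_[p] := by
    have hxi : x - (a + (p : ℚ_[p]) ^ m * (i : ℚ_[p])) =
        (p : ℚ_[p]) ^ m * ((z - i : ℤ_[p]) : ℚ_[p]) := by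
      rw [PadicInt.coe_sub, PadicInt.coe_natCast, mul_sub,
        mul_div_cancel₀ (x - a) (pow_ne_zero m hp), sub_add_eq_sub_sub]
    rw [mem_padicBall, hxi, norm_mul, norm_pow, Padic.norm_p, pow_succ,
      mul_le_mul_iff_right₀ hp', PadicInt.padic_norm_e_of_padicInt,
      PadicInt.maximalIdeal_eq_span_p, ← pow_one (p : ℤ_[p]),
      ← PadicInt.norm_le_pow_iff_mem_span_pow]
    simp
  simpa only [mem_iff] using z.existsUnique_mem_range

lemma padicBall_eq_biUnion (a : ℚ_[p]) (m : ℕ) :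
    padicBall a m =
      ⋃ i ∈ Finset.range p, padicBall (a + (p : ℚ_[p]) ^ m * (i : ℚ_[p])) (m + 1) := by
  refine Set.Subset.antisymm (fun x hx => ?_) (Set.iUnion₂_subset fun i _ =>
    padicBall_subset (add_pow_mul_natCast_mem_padicBall a m i) m.le_succ)
  obtain ⟨i, ⟨hip, hxi⟩, -⟩ := existsUnique_mem_padicBall_succ hx
  exact Set.mem_biUnion (Finset.mem_coe.2 (Finset.mem_range.2 hip)) hxi

lemma pairwiseDisjoint_padicBall_succ (a : ℚ_[p]) (m : ℕ) :
    (Finset.range p : Set ℕ).PairwiseDisjoint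
      fun i : ℕ => padicBall (a + (p : ℚ_[p]) ^ m * (i : ℚ_[p])) (m + 1) := by
  refine fun i hi j hj hij => Set.disjoint_left.2 fun x hxi hxj => hij ?_
  have hx := padicBall_subset (add_pow_mul_natCast_mem_padicBall a m i) m.le_succ hxi
  exact (existsUnique_mem_padicBall_succ hx).unique
    ⟨Finset.mem_range.1 hi, hxi⟩ ⟨Finset.mem_range.1 hj, hxj⟩

variable (μ : Measure ℚ_[p])

lemma measure_padicBall_eq [μ.IsAddLeftInvariant] (a b : ℚ_[p]) (m : ℕ) :
    μ (padicBall a m) = μ (padicBall b m) := by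
  rw [← measure_preimage_add μ (a - b), padicBall, padicBall, preimage_add_closedBall,
    sub_sub_cancel]

lemma measure_padicBall_eq_mul [μ.IsAddLeftInvariant] (a b : ℚ_[p]) (m s : ℕ) :
    μ (padicBall a m) = (p : ℝ≥0∞) ^ s * μ (padicBall b (m + s)) := by
  induction s with
  | zero => rw [pow_zero, one_mul, add_zero, measure_padicBall_eq μ a b]
  | succ s ih =>
    rw [ih, padicBall_eq_biUnion b, measure_biUnion_finset (pairwiseDisjoint_padicBall_succ b _)
      fun i _ => measurableSet_padicBall _ _,
      Finset.sum_congr rfl fun i _ => measure_padicBall_eq μ _ b (m + s + 1),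
      Finset.sum_const, Finset.card_range, nsmul_eq_mul, pow_succ, mul_assoc, add_assoc]

lemma measure_sep_padicBall_le [μ.IsAddLeftInvariant] {Q : ℚ_[p] → Prop} {C : ℝ≥0∞} {a : ℚ_[p]}
    {m : ℕ} (h : ∀ c ∈ padicBall a m,
      μ {x ∈ padicBall c (m + 1) | Q x} ≤ C * μ (padicBall c (m + 1))) :
    μ {x ∈ padicBall a m | Q x} ≤ C * μ (padicBall a m) := by
  let c (i : ℕ) : ℚ_[p] := a + (p : ℚ_[p]) ^ m * (i : ℚ_[p])
  calc μ {x ∈ padicBall a m | Q x}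
      = μ (⋃ i ∈ Finset.range p, {x ∈ padicBall (c i) (m + 1) | Q x}) := by
        rw [padicBall_eq_biUnion]
        congr 1
        ext x
        simp only [Set.mem_ofPred_eq, Set.mem_iUnion, exists_prop, c]
        tauto
    _ ≤ ∑ i ∈ Finset.range p, C * μ (padicBall (c i) (m + 1)) :=
        (measure_biUnion_finset_le _ _).trans
          (Finset.sum_le_sum fun i _ => h _ (add_pow_mul_natCast_mem_padicBall a m i))
    _ = C * μ (padicBall a m) := by
        rw [Finset.sum_congr rfl fun i _ => by rw [measure_padicBall_eq μ (c i) a],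
          measure_padicBall_eq_mul μ a a m 1, Finset.sum_const, Finset.card_range, nsmul_eq_mul]
        ring

end PadicBalls

section Nondivergence

variable {X P : Type*} [PartialOrder P]

/-- `G` is a new member by which the chain `F` can be refined. -/
def IsChainExtension (F : Set P) (G : P) : Prop := G ∉ F ∧ ∀ G' ∈ F, G ≤ G' ∨ G' ≤ G

lemma IsChainExtension.isChain_insert {F : Set P} {G : P} (hG : IsChainExtension F G)
    (hF : IsChain (· ≤ ·) F) : IsChain (· ≤ ·) (insert G F) :=
  hF.insert fun G' hG' _ => hG.2 G' hG'

lemma IsChainExtension.of_insert {F : Set P} {G G' : P}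
    (hG : IsChainExtension (insert G' F) G) : IsChainExtension F G :=
  ⟨fun h => hG.1 (Set.mem_insert_of_mem _ h), fun K hK => hG.2 K (Set.mem_insert_of_mem _ hK)⟩

/-- The point `x` is protected relative to the chain `F`, for weights `ψ G` with thresholds `θ G`:
`F` can be refined to a chain whose new members have weight in `[ε * θ G, θ G)` at `x` and whose
further refinements all have weight at least `θ G` at `x`. -/
def IsProtected (ψ : P → X → ℝ) (θ : P → ℝ) (ε : ℝ) (F : Set P) (x : X) : Prop :=
  ∃ F' : Set P, F ⊆ F' ∧ IsChain (· ≤ ·) F' ∧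
    (∀ G ∈ F', G ∉ F → ε * θ G ≤ ψ G x ∧ ψ G x < θ G) ∧
    ∀ G, IsChainExtension F' G → θ G ≤ ψ G x

variable {ψ : P → X → ℝ} {θ : P → ℝ} {ε : ℝ}

lemma isProtected_of_forall_isChainExtension {F : Set P} (hF : IsChain (· ≤ ·) F) {x : X}
    (h : ∀ G, IsChainExtension F G → θ G ≤ ψ G x) : IsProtected ψ θ ε F x :=
  ⟨F, subset_rfl, hF, fun _ hG hG' => absurd hG hG', h⟩

lemma IsProtected.of_insert {F : Set P} {G : P} {x : X}
    (h : IsProtected ψ θ ε (insert G F) x) (hε : ε * θ G ≤ ψ G x) (hθ : ψ G x < θ G) :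
    IsProtected ψ θ ε F x := by
  obtain ⟨F', hFF', hF', hnew, hext⟩ := h
  refine ⟨F', (Set.subset_insert G F).trans hFF', hF', fun G₁ hG₁ hG₁F => ?_, hext⟩
  obtain rfl | hne := eq_or_ne G₁ G
  · exact ⟨hε, hθ⟩
  · exact hnew G₁ hG₁ (Set.mem_insert_iff.not.2 (not_or.2 ⟨hne, hG₁F⟩))

lemma not_isChainExtension_of_card_le {k : ℕ}
    (hk : ∀ F : Finset P, IsChain (· ≤ ·) (F : Set P) → F.card ≤ k) {F : Finset P}
    (hF : IsChain (· ≤ ·) (F : Set P)) (hFk : k ≤ F.card) (G : P) :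
    ¬ IsChainExtension (F : Set P) G := by
  classical
  intro hG
  have hcard := hk (insert G F) (by rw [Finset.coe_insert]; exact hG.isChain_insert hF)
  rw [Finset.card_insert_of_notMem (mt Finset.mem_coe.2 hG.1)] at hcard
  omega

lemma card_le_of_isChain_of_strictMono {k : ℕ} {r : P → ℕ} (hr : StrictMono r)
    (hrk : ∀ G, r G ∈ Finset.Icc 1 k) (F : Finset P) (hF : IsChain (· ≤ ·) (F : Set P)) :
    F.card ≤ k := by
  have hinj : Set.InjOn r F := fun G hG G' hG' h => by
    by_contra hne
    obtain hle | hle := hF hG hG' hne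
    · exact (hr (hle.lt_of_ne hne)).ne h
    · exact (hr (hle.lt_of_ne' hne)).ne' h
  simpa using Finset.card_le_card_of_injOn r (fun G _ => hrk G) hinj

variable {ψ : P → ℚ_[p] → ℝ} {μ : Measure ℚ_[p]} {κ : ℝ≥0∞} {m₀ : ℕ} {a : ℚ_[p]} {m : ℕ}

/-- Total number (up to a factor `κ`) of exceptional balls removed in `l` refinement steps. -/
noncomputable def exceptionalBound (p l : ℕ) : ℝ≥0∞ :=
  ∑ i ∈ Finset.range l, (p : ℝ≥0∞) ^ (i + 1)

lemma exceptionalBound_succ (p l : ℕ) :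
    exceptionalBound p (l + 1) = p * (exceptionalBound p l + 1) := by
  rw [exceptionalBound, exceptionalBound, Finset.sum_range_succ', mul_add, Finset.mul_sum]
  simp only [pow_succ', pow_zero]

lemma exceptionalBound_ne_top (p l : ℕ) : exceptionalBound p l ≠ ∞ :=
  ENNReal.sum_ne_top.2 fun _ _ => ENNReal.pow_ne_top (ENNReal.natCast_ne_top p)

lemma measure_not_isProtected_child_le [μ.IsAddLeftInvariant] {F : Set P} {G : P} {c : ℚ_[p]}
    {l : ℕ} (hc : c ∈ padicBall a m) (hθ : ∀ x ∈ padicBall c (m + 1), ψ G x < θ G)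
    (hgood : μ {x ∈ padicBall a m | ψ G x < ε * θ G} ≤ κ * μ (padicBall a m))
    (hins : μ {x ∈ padicBall a m | ¬ IsProtected ψ θ ε (insert G F) x} ≤
      exceptionalBound p l * κ * μ (padicBall a m)) :
    μ {x ∈ padicBall c (m + 1) | ¬ IsProtected ψ θ ε F x} ≤
      exceptionalBound p (l + 1) * κ * μ (padicBall c (m + 1)) := by
  have hsub : {x ∈ padicBall c (m + 1) | ¬ IsProtected ψ θ ε F x} ⊆
      {x ∈ padicBall a m | ¬ IsProtected ψ θ ε (insert G F) x} ∪
        {x ∈ padicBall a m | ψ G x < ε * θ G} := by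
    rintro x ⟨hx, hxF⟩
    have hxa := padicBall_subset hc m.le_succ hx
    by_cases hxε : ε * θ G ≤ ψ G x
    · exact Or.inl ⟨hxa, fun h => hxF (h.of_insert hxε (hθ x hx))⟩
    · exact Or.inr ⟨hxa, not_le.1 hxε⟩
  calc _ ≤ exceptionalBound p l * κ * μ (padicBall a m) + κ * μ (padicBall a m) :=
        (measure_mono hsub).trans ((measure_union_le _ _).trans (add_le_add hins hgood))
    _ = _ := by
        rw [measure_padicBall_eq_mul μ a c m 1, exceptionalBound_succ]
        ring

lemma measure_not_isProtected_eq_zero {F : Set P} (hF : IsChain (· ≤ ·) F)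
    (h : ∀ G, IsChainExtension F G → ∀ x ∈ padicBall a m, θ G ≤ ψ G x) :
    μ {x ∈ padicBall a m | ¬ IsProtected ψ θ ε F x} = 0 := by
  rw [Set.sep_eq_empty_iff_mem_false.2 fun x hx => not_not.2 <|
    isProtected_of_forall_isChainExtension hF fun G hG => h G hG x hx, measure_empty]

theorem measure_not_isProtected_le [μ.IsAddLeftInvariant] {k : ℕ}
    (hk : ∀ F : Finset P, IsChain (· ≤ ·) (F : Set P) → F.card ≤ k)
    (hgood : ∀ G a m, ‖a‖ ≤ 1 → (∃ x ∈ padicBall a m, θ G ≤ ψ G x) →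
      μ {x ∈ padicBall a m | ψ G x < ε * θ G} ≤ κ * μ (padicBall a m))
    (hloc : ∀ G a, ‖a‖ ≤ 1 → ∀ x ∈ padicBall a m₀, ψ G x = ψ G a)
    (l : ℕ) (F : Finset P) (hF : IsChain (· ≤ ·) (F : Set P)) (hFl : k ≤ F.card + l)
    (ha : ‖a‖ ≤ 1)
    (hsup : ∀ G, IsChainExtension (F : Set P) G → ∃ x ∈ padicBall a m, θ G ≤ ψ G x) :
    μ {x ∈ padicBall a m | ¬ IsProtected ψ θ ε (F : Set P) x} ≤
      exceptionalBound p l * κ * μ (padicBall a m) := by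
  classical
  induction l generalizing F a m with
  | zero =>
    exact (measure_not_isProtected_eq_zero hF fun G hG =>
      absurd hG (not_isChainExtension_of_card_le hk hF hFl G)).le.trans zero_le
  | succ l ihl =>
    obtain ⟨e, he⟩ : ∃ e, m₀ ≤ m + e := ⟨m₀, Nat.le_add_left _ _⟩
    induction e generalizing a m with
    | zero =>
      refine (measure_not_isProtected_eq_zero hF fun G hG x hx => ?_).le.trans zero_le
      obtain ⟨y, hy, hyG⟩ := hsup G hG
      have hsub := padicBall_subset (mem_padicBall_self a m₀) he
      rwa [hloc G a ha x (hsub hx), ← hloc G a ha y (hsub hy)]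
    | succ e ihe =>
      refine measure_sep_padicBall_le μ fun c hc => ?_
      by_cases H : ∀ G, IsChainExtension (F : Set P) G → ∃ x ∈ padicBall c (m + 1), θ G ≤ ψ G x
      · exact ihe (norm_le_one_of_mem_padicBall ha hc) H (by omega)
      push Not at H
      obtain ⟨G, hG, hGlt⟩ := H
      refine measure_not_isProtected_child_le hc hGlt (hgood G a m ha (hsup G hG)) ?_
      rw [← Finset.coe_insert]
      refine ihl (insert G F) (by simpa using hG.isChain_insert hF) ?_ ha fun G' hG' =>
        hsup G' (IsChainExtension.of_insert (by simpa using hG'))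
      rw [Finset.card_insert_of_notMem (mt Finset.mem_coe.2 hG.1)]
      omega

end Nondivergence

section PowerSeries

open Filter Topology

variable {K : Type*} [NormedField K]

/-- The power series `∑ aₖ sᵏ` as a function on the closed unit ball, where it converges for null
sequences `a`. -/
noncomputable def evalSeries (a : ℕ → K) (s : K) : K := ∑' k, a k * s ^ k

/-- The term `a N` is strictly larger than all later ones. For a null sequence `a` this bounds by
`N` the number of zeros of `evalSeries a` in the closed unit ball (Strassmann). -/
def DominatesTail (a : ℕ → K) (N : ℕ) : Prop := ∀ k, N < k → ‖a k‖ < ‖a N‖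

/-- Coefficients of the divided difference `s ↦ (f s - f u) / (s - u)` of `f = evalSeries a`. -/
noncomputable def dividedDifference (a : ℕ → K) (u : K) (j : ℕ) : K :=
  evalSeries (fun k => a (k + (j + 1))) u

/-- A Remez-type inequality of degree `N` on the closed unit ball: `N + 1` points at mutual
distances at least `η` where `‖g‖ ≤ ε` force `‖g s‖ ≤ ε * R ^ N` at every `s` within `η * R` of all
of them. Polynomials of degree `N` satisfy it by Lagrange interpolation. -/
def HasRemezInequality (N : ℕ) (g : K → K) : Prop :=
  ∀ (u : Fin (N + 1) → K) (η R ε : ℝ), 0 < η → 1 ≤ R → (∀ i, ‖u i‖ ≤ 1) →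
    (∀ i j, i ≠ j → η ≤ ‖u i - u j‖) → (∀ i, ‖g (u i)‖ ≤ ε) →
    ∀ s : K, ‖s‖ ≤ 1 → (∀ i, ‖s - u i‖ ≤ η * R) → ‖g s‖ ≤ ε * R ^ N

lemma HasRemezInequality.mono {M N : ℕ} {g : K → K} (h : HasRemezInequality M g) (hMN : M ≤ N) :
    HasRemezInequality N g := by
  intro u η R ε hη hR hu hsep hε s hs hsu
  have hM : M + 1 ≤ N + 1 := by omega
  refine (h (fun i => u (Fin.castLE hM i)) η R ε hη hR (fun i => hu _)
    (fun i j hij => hsep _ _ ((Fin.castLE_injective hM).ne hij)) (fun i => hε _) s hs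
    fun i => hsu _).trans ?_
  exact mul_le_mul_of_nonneg_left (pow_le_pow_right₀ hR hMN) ((norm_nonneg _).trans (hε 0))

lemma HasRemezInequality.congr {N : ℕ} {g g' : K → K} (h : HasRemezInequality N g)
    (hg : ∀ s, ‖s‖ ≤ 1 → g s = g' s) : HasRemezInequality N g' := by
  intro u η R ε hη hR hu hsep hε s hs hsu
  rw [← hg s hs]
  exact h u η R ε hη hR hu hsep (fun i => hg (u i) (hu i) ▸ hε i) s hs hsu

lemma hasRemezInequality_zero (N : ℕ) : HasRemezInequality N fun _ : K => 0 := by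
  intro u η R ε _ hR _ _ hε s _ _
  rw [norm_zero]
  exact mul_nonneg ((norm_nonneg _).trans (hε 0)) (pow_nonneg (zero_le_one.trans hR) N)

variable [IsUltrametricDist K]

lemma norm_evalSeries_lt {a : ℕ → K} {A : ℝ} (ha : ∀ k, ‖a k‖ < A) {s : K} (hs : ‖s‖ ≤ 1) :
    ‖evalSeries a s‖ < A := by
  have hA : 0 < A := (norm_nonneg _).trans_lt (ha 0)
  rw [← mem_ball_zero_iff]
  refine tsum_mem (s := IsUltrametricDist.ball_openAddSubgroup K hA)
    (IsUltrametricDist.isClosed_ball 0 A) fun k => mem_ball_zero_iff.2 ?_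
  rw [norm_mul, norm_pow]
  exact (mul_le_of_le_one_right (norm_nonneg _) (pow_le_one₀ (norm_nonneg _) hs)).trans_lt (ha k)

lemma tendsto_evalSeries_add {a : ℕ → K} (ha : Tendsto a atTop (𝓝 0)) {u : K} (hu : ‖u‖ ≤ 1) :
    Tendsto (fun j => evalSeries (fun k => a (k + j)) u) atTop (𝓝 0) := by
  rw [Metric.tendsto_atTop] at ha ⊢
  intro ε hε
  obtain ⟨N, hN⟩ := ha ε hε
  refine ⟨N, fun j hj => ?_⟩
  rw [dist_zero_right]
  refine norm_evalSeries_lt (fun k => ?_) hu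
  simpa only [dist_zero_right] using hN (k + j) (by omega)

lemma tendsto_dividedDifference {a : ℕ → K} (ha : Tendsto a atTop (𝓝 0)) {u : K} (hu : ‖u‖ ≤ 1) :
    Tendsto (dividedDifference a u) atTop (𝓝 0) :=
  (tendsto_evalSeries_add ha hu).comp (tendsto_add_atTop_nat 1)

variable [CompleteSpace K]

lemma summable_mul_pow {a : ℕ → K} (ha : Tendsto a atTop (𝓝 0)) {s : K} (hs : ‖s‖ ≤ 1) :
    Summable fun k => a k * s ^ k := by
  refine NonarchimedeanAddGroup.summable_of_tendsto_cofinite_zero ?_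
  rw [Nat.cofinite_eq_atTop]
  refine squeeze_zero_norm (fun k => ?_) (tendsto_zero_iff_norm_tendsto_zero.1 ha)
  rw [norm_mul, norm_pow]
  exact mul_le_of_le_one_right (norm_nonneg _) (pow_le_one₀ (norm_nonneg _) hs)

lemma evalSeries_eq_add_mul {a : ℕ → K} (ha : Tendsto a atTop (𝓝 0)) {s : K} (hs : ‖s‖ ≤ 1) :
    evalSeries a s = a 0 + s * evalSeries (fun k => a (k + 1)) s := by
  rw [evalSeries, (summable_mul_pow ha hs).tsum_eq_zero_add, evalSeries, ← tsum_mul_left,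
    pow_zero, mul_one]
  congr 1
  exact tsum_congr fun k => by ring

lemma evalSeries_sum_mul {ι : Type*} (t : Finset ι) (c : ι → K) {a : ι → ℕ → K}
    (ha : ∀ i, Tendsto (a i) atTop (𝓝 0)) {s : K} (hs : ‖s‖ ≤ 1) :
    evalSeries (fun k => ∑ i ∈ t, c i * a i k) s = ∑ i ∈ t, c i * evalSeries (a i) s := by
  simp only [evalSeries, ← tsum_mul_left, Finset.sum_mul, mul_assoc]
  exact Summable.tsum_finsetSum fun i _ => (summable_mul_pow (ha i) hs).mul_left _

lemma DominatesTail.norm_evalSeries {a : ℕ → K} (ha : Tendsto a atTop (𝓝 0))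
    (h : DominatesTail a 0) {s : K} (hs : ‖s‖ ≤ 1) : ‖evalSeries a s‖ = ‖a 0‖ := by
  have htail : ‖s * evalSeries (fun k => a (k + 1)) s‖ < ‖a 0‖ := by
    rw [norm_mul]
    exact (mul_le_of_le_one_left (norm_nonneg _) hs).trans_lt
      (norm_evalSeries_lt (fun k => h _ k.succ_pos) hs)
  rw [evalSeries_eq_add_mul ha hs, IsUltrametricDist.norm_add_eq_max_of_norm_ne_norm htail.ne',
    max_eq_left htail.le]

lemma evalSeries_sub_evalSeries {a : ℕ → K} (ha : Tendsto a atTop (𝓝 0)) {u s : K}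
    (hu : ‖u‖ ≤ 1) (hs : ‖s‖ ≤ 1) :
    evalSeries a s - evalSeries a u = (s - u) * evalSeries (dividedDifference a u) s := by
  -- With `c j = ∑ₖ a (k + j) uᵏ` one has `a j = c j - u * c (j + 1)`.
  let c (j : ℕ) : K := evalSeries (fun k => a (k + j)) u
  have hc : Tendsto c atTop (𝓝 0) := tendsto_evalSeries_add ha hu
  have hac : a = fun j => c j - u * c (j + 1) := funext fun j => by
    have h := evalSeries_eq_add_mul ((tendsto_add_atTop_iff_nat j).2 ha) hu
    simp only [zero_add, add_assoc, add_comm 1 j] at h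
    exact eq_sub_of_add_eq h.symm
  have hsplit : evalSeries a s = evalSeries c s - u * evalSeries (dividedDifference a u) s := by
    conv_lhs => rw [hac]
    simp only [evalSeries, sub_mul, mul_assoc]
    rw [(summable_mul_pow hc hs).tsum_sub
      ((summable_mul_pow ((tendsto_add_atTop_iff_nat 1).2 hc) hs).mul_left u), tsum_mul_left]
    rfl
  have hcs : evalSeries c s = evalSeries a u + s * evalSeries (dividedDifference a u) s :=
    evalSeries_eq_add_mul hc hs
  rw [hsplit, hcs]
  ring

lemma DominatesTail.dividedDifference_of_succ {a : ℕ → K} (ha : Tendsto a atTop (𝓝 0)) {N : ℕ}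
    (h : DominatesTail a (N + 1)) {u : K} (hu : ‖u‖ ≤ 1) :
    DominatesTail (dividedDifference a u) N := by
  have hN : ‖dividedDifference a u N‖ = ‖a (N + 1)‖ := by
    have h0 : DominatesTail (fun k => a (k + (N + 1))) 0 := fun k hk => by
      simpa only [zero_add] using h (k + (N + 1)) (by omega)
    simpa only [dividedDifference, zero_add] using
      h0.norm_evalSeries ((tendsto_add_atTop_iff_nat (N + 1)).2 ha) hu
  intro k hk
  rw [hN]
  exact norm_evalSeries_lt (fun i => h _ (by omega)) hu

lemma DominatesTail.hasRemezInequality {N : ℕ} {a : ℕ → K} (ha : Tendsto a atTop (𝓝 0))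
    (h : DominatesTail a N) : HasRemezInequality N (evalSeries a) := by
  induction N generalizing a with
  | zero =>
    intro u η R ε _ _ hu _ hε s hs _
    rw [h.norm_evalSeries ha hs, ← h.norm_evalSeries ha (hu 0), pow_zero, mul_one]
    exact hε 0
  | succ N ih =>
    intro u η R ε hη hR hu hsep hε s hs hsu
    let b := dividedDifference a (u 0)
    have hab (s : K) (hs : ‖s‖ ≤ 1) :
        evalSeries a s - evalSeries a (u 0) = (s - u 0) * evalSeries b s :=
      evalSeries_sub_evalSeries ha (hu 0) hs
    have hb (i : Fin (N + 1)) : ‖evalSeries b (u i.succ)‖ ≤ ε / η := by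
      rw [le_div_iff₀' hη]
      calc η * ‖evalSeries b (u i.succ)‖ ≤ ‖u i.succ - u 0‖ * ‖evalSeries b (u i.succ)‖ := by
            gcongr
            exact hsep _ _ (Fin.succ_ne_zero i)
        _ = ‖evalSeries a (u i.succ) - evalSeries a (u 0)‖ := by rw [hab _ (hu _), norm_mul]
        _ ≤ ε := by
            rw [sub_eq_add_neg]
            exact (IsUltrametricDist.norm_add_le_max _ _).trans
              (max_le (hε _) ((norm_neg _).trans_le (hε _)))
    have hbs : ‖evalSeries b s‖ ≤ ε / η * R ^ N :=
      ih (tendsto_dividedDifference ha (hu 0)) (h.dividedDifference_of_succ ha (hu 0))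
        (fun i => u i.succ) η R (ε / η) hη hR (fun i => hu _)
        (fun i j hij => hsep _ _ ((Fin.succ_injective _).ne hij)) hb s hs fun i => hsu _
    rw [sub_eq_iff_eq_add.1 (hab s hs)]
    refine (IsUltrametricDist.norm_add_le_max _ _).trans (max_le ?_ ?_)
    · calc ‖(s - u 0) * evalSeries b s‖ ≤ (η * R) * (ε / η * R ^ N) := by
            rw [norm_mul]
            gcongr
            exact hsu 0
        _ = ε * R ^ (N + 1) := by field_simp; ring
    · exact (hε 0).trans
        (le_mul_of_one_le_right ((norm_nonneg _).trans (hε 0)) (one_le_pow₀ hR))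

lemma continuousOn_evalSeries {a : ℕ → K} (ha : Tendsto a atTop (𝓝 0)) :
    ContinuousOn (evalSeries a) (closedBall 0 1) := by
  have hlim : TendstoUniformlyOn (fun n s => ∑ k ∈ Finset.range n, a k * s ^ k) (evalSeries a)
      atTop (closedBall 0 1) := by
    rw [Metric.tendstoUniformlyOn_iff]
    intro ε hε
    obtain ⟨N, hN⟩ := Metric.tendsto_atTop.1 ha ε hε
    filter_upwards [eventually_ge_atTop N] with n hn s hs
    rw [mem_closedBall_zero_iff] at hs
    have htail : ∑' k, a (k + n) * s ^ (k + n) = s ^ n * evalSeries (fun k => a (k + n)) s := by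
      rw [evalSeries, ← tsum_mul_left]
      exact tsum_congr fun k => by ring
    rw [dist_eq_norm, evalSeries, ← (summable_mul_pow ha hs).sum_add_tsum_nat_add n,
      add_sub_cancel_left, htail, norm_mul, norm_pow]
    refine (mul_le_of_le_one_left (norm_nonneg _) (pow_le_one₀ (norm_nonneg _) hs)).trans_lt
      (norm_evalSeries_lt (fun k => ?_) hs)
    simpa only [dist_zero_right] using hN (k + n) (by omega)
  exact hlim.continuousOn (Frequently.of_forall fun n => by fun_prop)

end PowerSeries

section FiniteDimensionalFamilies

open Filter Topology
open scoped ZeroAtInfty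

lemma exists_dominatesTail_of_forall_lt {K : Type*} [NormedField K] {a : ℕ → K} {N j : ℕ}
    (hj : j ≤ N) (h : ∀ k, N < k → ‖a k‖ < ‖a j‖) : ∃ N' ≤ N, DominatesTail a N' := by
  induction N, hj using Nat.le_induction with
  | base => exact ⟨j, le_rfl, h⟩
  | succ N _ ih =>
    obtain hlt | hle := lt_or_ge ‖a (N + 1)‖ ‖a j‖
    · obtain ⟨N', hN', hdom⟩ := ih fun k hk => by
        obtain rfl | hne := eq_or_ne k (N + 1)
        · exact hlt
        · exact h k (by omega)
      exact ⟨N', by omega, hdom⟩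
    · exact ⟨N + 1, le_rfl, fun k hk => (h k hk).trans_le hle⟩

variable {K : Type*} [NontriviallyNormedField K]

lemma tendsto_atTop_zeroAtInfty (v : C₀(ℕ, K)) : Tendsto v atTop (𝓝 0) := by
  have h : Tendsto v (cocompact ℕ) (𝓝 0) := v.zero_at_infty'
  rwa [cocompact_eq_cofinite, Nat.cofinite_eq_atTop] at h

lemma DominatesTail.of_smul {a : ℕ → K} {c : K} {N : ℕ} (h : DominatesTail (c • a) N) :
    DominatesTail a N := by
  intro k hk
  have hlt := h k hk
  simp only [Pi.smul_apply, smul_eq_mul, norm_mul] at hlt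
  exact lt_of_mul_lt_mul_left hlt (norm_nonneg c)

variable [IsUltrametricDist K]

lemma eventually_exists_le_dominatesTail {v : C₀(ℕ, K)} (hv : v ≠ 0) :
    ∃ N, ∀ᶠ w : C₀(ℕ, K) in 𝓝 v, ∃ N' ≤ N, DominatesTail w N' := by
  obtain ⟨j, hj⟩ : ∃ j, v j ≠ 0 := by
    by_contra! h
    exact hv (DFunLike.ext _ _ h)
  obtain ⟨N, hN⟩ := Metric.tendsto_atTop.1 (tendsto_atTop_zeroAtInfty v) ‖v j‖ (norm_pos_iff.2 hj)
  refine ⟨max j N, ?_⟩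
  filter_upwards [Metric.ball_mem_nhds v (norm_pos_iff.2 hj)] with w hw
  have hwv (k : ℕ) : ‖w k - v k‖ < ‖v j‖ := by
    rw [← dist_eq_norm]
    exact (BoundedContinuousFunction.dist_coe_le_dist (f := w.toBCF) (g := v.toBCF) k).trans_lt hw
  have hwj : ‖w j‖ = ‖v j‖ := by
    rw [← sub_add_cancel (w j) (v j),
      IsUltrametricDist.norm_add_eq_max_of_norm_ne_norm (hwv j).ne, max_eq_right (hwv j).le]
  refine exists_dominatesTail_of_forall_lt (le_max_left j N) fun k hk => ?_
  have hvk : ‖v k‖ < ‖v j‖ := by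
    simpa only [dist_zero_right] using hN k ((le_max_right j N).trans hk.le)
  rw [hwj, ← sub_add_cancel (w k) (v k)]
  exact (IsUltrametricDist.norm_add_le_max _ _).trans_lt (max_lt (hwv k) hvk)

lemma exists_forall_dominatesTail [ProperSpace K] {V : Type*} [NormedAddCommGroup V]
    [NormedSpace K V] [FiniteDimensional K V] (L : V →L[K] C₀(ℕ, K))
    (hL : Function.Injective L) : ∃ N, ∀ v ≠ 0, ∃ N' ≤ N, DominatesTail (L v) N' := by
  have : ProperSpace V := FiniteDimensional.proper K V
  obtain ⟨c, hc⟩ := NormedField.exists_one_lt_norm K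
  let shell : Set V := closedBall 0 1 \ ball 0 (1 / ‖c‖)
  have hshell : IsCompact shell := (isCompact_closedBall 0 1).diff isOpen_ball
  obtain ⟨N, hN⟩ : ∃ N, ∀ v ∈ shell, ∃ N' ≤ N, DominatesTail (L v) N' := by
    refine hshell.induction_on (p := fun S => ∃ N, ∀ v ∈ S, ∃ N' ≤ N, DominatesTail (L v) N')
      ⟨0, fun _ => False.elim⟩ (fun S T hST ⟨N, hN⟩ => ⟨N, fun v hv => hN v (hST hv)⟩) ?_
      fun v hv => ?_
    · rintro S T ⟨M, hM⟩ ⟨N, hN⟩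
      refine ⟨max M N, ?_⟩
      rintro v (hv | hv)
      · exact (hM v hv).imp fun N' h => ⟨h.1.trans (le_max_left M N), h.2⟩
      · exact (hN v hv).imp fun N' h => ⟨h.1.trans (le_max_right M N), h.2⟩
    · have hv0 : v ≠ 0 := by
        rintro rfl
        exact hv.2 (mem_ball_self (by positivity))
      obtain ⟨N, hN⟩ := eventually_exists_le_dominatesTail ((map_ne_zero_iff L hL).2 hv0)
      exact ⟨_, mem_nhdsWithin_of_mem_nhds (L.continuous.continuousAt.eventually hN), N,
        fun _ h => h⟩
  refine ⟨N, fun v hv => ?_⟩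
  obtain ⟨d, -, hd1, hdc, -⟩ := rescale_to_shell hc one_pos hv
  obtain ⟨N', hN', hdom⟩ := hN (d • v)
    ⟨mem_closedBall_zero_iff.2 hd1.le, fun h => hdc.not_gt (mem_ball_zero_iff.1 h)⟩
  rw [map_smul, ZeroAtInftyContinuousMap.coe_smul] at hdom
  exact ⟨N', hN', hdom.of_smul⟩

theorem exists_hasRemezInequality_sum [ProperSpace K] {ι : Type*}
    [Fintype ι] {a : ι → ℕ → K} (ha : ∀ i, Tendsto (a i) atTop (𝓝 0)) :
    ∃ N, ∀ c : ι → K, HasRemezInequality N fun s => ∑ i, c i * evalSeries (a i) s := by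
  let A (i : ι) : C₀(ℕ, K) := ⟨⟨a i, continuous_of_discreteTopology⟩, by
    simpa only [cocompact_eq_cofinite, Nat.cofinite_eq_atTop] using ha i⟩
  have : FiniteDimensional K (Submodule.span K (Set.range A)) :=
    FiniteDimensional.span_of_finite K (Set.finite_range A)
  let L := (Submodule.span K (Set.range A)).subtypeL
  have hL : Function.Injective L := Subtype.val_injective
  obtain ⟨N, hN⟩ :=
    exists_forall_dominatesTail (K := K) (V := Submodule.span K (Set.range A)) L hL
  refine ⟨N, fun c => ?_⟩
  let w : Submodule.span K (Set.range A) := ⟨∑ i, c i • A i, Submodule.sum_mem _ fun i _ =>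
    Submodule.smul_mem _ _ (Submodule.subset_span ⟨i, rfl⟩)⟩
  have hw : ⇑(w : C₀(ℕ, K)) = fun k => ∑ i, c i * a i k := by
    ext k
    let eval : C₀(ℕ, K) →+ K :=
      { toFun := fun f => f k, map_zero' := rfl, map_add' := fun _ _ => rfl }
    exact map_sum eval _ _
  have hg (s : K) (hs : ‖s‖ ≤ 1) : evalSeries w s = ∑ i, c i * evalSeries (a i) s := by
    rw [hw, evalSeries_sum_mul Finset.univ c ha hs]
  obtain h0 | h0 := eq_or_ne w 0
  · refine (hasRemezInequality_zero N).congr fun s hs => ?_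
    rw [← hg s hs, h0]
    simp [evalSeries]
  · obtain ⟨N', hN', hdom⟩ := hN w h0
    exact ((hdom.hasRemezInequality (tendsto_atTop_zeroAtInfty _)).mono hN').congr hg

end FiniteDimensionalFamilies

section SublevelSets

lemma measure_le_of_packingNumber_le (μ : Measure ℚ_[p]) [μ.IsAddLeftInvariant] {S : Set ℚ_[p]}
    {m N : ℕ} (h : packingNumber ((p : ℝ≥0)⁻¹ ^ m) S ≤ N) (a : ℚ_[p]) :
    μ S ≤ N * μ (padicBall a m) := by
  have hN := (coveringNumber_le_packingNumber ((p : ℝ≥0)⁻¹ ^ m) S).trans h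
  obtain ⟨C, -, hfin, hcover, hcard⟩ :=
    exists_set_encard_eq_coveringNumber (hN.trans_lt (ENat.natCast_lt_top N)).ne
  lift C to Finset ℚ_[p] using hfin
  rw [← hcard, Set.encard_coe_eq_coe_finsetCard, Nat.cast_le] at hN
  calc μ S ≤ μ (⋃ x ∈ C, padicBall x m) := measure_mono <| by
        simpa [padicBall] using hcover.subset_iUnion_closedBall
    _ ≤ ∑ x ∈ C, μ (padicBall x m) := measure_biUnion_finset_le _ _
    _ = C.card * μ (padicBall a m) := by
        rw [Finset.sum_congr rfl fun x _ => measure_padicBall_eq μ x a m, Finset.sum_const,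
          nsmul_eq_mul]
    _ ≤ N * μ (padicBall a m) := by gcongr

variable {N : ℕ} {g : ℚ_[p] → ℚ_[p]} {a x₁ : ℚ_[p]} {m : ℕ}

lemma HasRemezInequality.packingNumber_le (hg : HasRemezInequality N g) (ha : ‖a‖ ≤ 1) (s : ℕ)
    (hx₁ : x₁ ∈ padicBall a m) :
    packingNumber ((p : ℝ≥0)⁻¹ ^ (m + s))
      {x ∈ padicBall a m | ‖g x‖ < ((p : ℝ) ^ (s * N))⁻¹ * ‖g x₁‖} ≤ N := by
  have hp := one_lt_natCast_prime (p := p)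
  refine iSup₂_le fun C hC => iSup_le fun hsep => not_lt.1 fun hlt => ?_
  obtain ⟨D, hDC, hD⟩ := Set.exists_subset_encard_eq (Order.add_one_le_of_lt hlt)
  obtain ⟨u, hu, rfl⟩ : ∃ u : Fin (N + 1) → ℚ_[p], Function.Injective u ∧ Set.range u = D := by
    have hfin : D.Finite := Set.finite_of_encard_eq_coe hD
    lift D to Finset ℚ_[p] using hfin
    rw [Set.encard_coe_eq_coe_finsetCard] at hD
    let e := D.equivFinOfCardEq (n := N + 1) (mod_cast hD)
    exact ⟨_, Subtype.val_injective.comp e.symm.injective, by simp [Set.range_comp]⟩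
  have hmem (i : Fin (N + 1)) := hC (hDC (Set.mem_range_self i))
  obtain ⟨j, hj⟩ := Finite.exists_max fun i => ‖g (u i)‖
  have hmax : ‖g x₁‖ ≤ ‖g (u j)‖ * ((p : ℝ) ^ s) ^ N := by
    refine hg u ((p : ℝ)⁻¹ ^ (m + s)) _ _ (by positivity) (one_le_pow₀ hp.le)
      (fun i => norm_le_one_of_mem_padicBall ha (hmem i).1) (fun i i' hii' => ?_) hj x₁
      (norm_le_one_of_mem_padicBall ha hx₁) fun i => ?_
    · have h : (((p : ℝ≥0)⁻¹ ^ (m + s) : ℝ≥0) : ℝ≥0∞) < edist (u i) (u i') :=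
        hsep (hDC (Set.mem_range_self i)) (hDC (Set.mem_range_self i')) (hu.ne hii')
      rw [edist_nndist, ENNReal.coe_lt_coe, ← NNReal.coe_lt_coe, coe_nndist, dist_eq_norm] at h
      simpa using h.le
    · have hx := hx₁
      rw [← padicBall_eq_of_mem (hmem i).1, mem_padicBall] at hx
      rwa [pow_add, mul_assoc, ← mul_pow, inv_mul_cancel₀ (by positivity), one_pow, mul_one]
  have hlt' := (hmem j).2
  rw [inv_mul_eq_div, lt_div_iff₀ (by positivity), pow_mul] at hlt'
  exact hlt'.not_ge hmax

lemma HasRemezInequality.measure_lt_le (hg : HasRemezInequality N g) (μ : Measure ℚ_[p])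
    [μ.IsAddLeftInvariant] (ha : ‖a‖ ≤ 1) (s : ℕ) (hx₁ : x₁ ∈ padicBall a m) :
    μ {x ∈ padicBall a m | ‖g x‖ < ((p : ℝ) ^ (s * N))⁻¹ * ‖g x₁‖} ≤
      N * ((p : ℝ≥0∞) ^ s)⁻¹ * μ (padicBall a m) := by
  have hp : (p : ℝ≥0∞) ^ s ≠ 0 := pow_ne_zero s (mod_cast (Fact.out : p.Prime).ne_zero)
  refine (measure_le_of_packingNumber_le μ (hg.packingNumber_le ha s hx₁) a).trans_eq ?_
  rw [measure_padicBall_eq_mul μ a a m s, mul_assoc, ← mul_assoc _ _ (μ _),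
    ENNReal.inv_mul_cancel hp (ENNReal.pow_ne_top (ENNReal.natCast_ne_top p)), one_mul]

end SublevelSets

section PlueckerCoordinates

variable {ι : Type*} {j : ℕ}

/-- The Plücker coordinates of the rows of `b`, indexed by all (also the non-injective) choices of
columns. Their sup norm plays the role of the covolume of the lattice spanned by the rows. -/
def plueckerVector (b : Matrix (Fin j) ι ℤ) : (Fin j → ι) → ℤ :=
  fun I => (b.submatrix id I).det

lemma plueckerVector_mul (T : Matrix (Fin j) (Fin j) ℤ) (b : Matrix (Fin j) ι ℤ) :
    plueckerVector (T * b) = T.det • plueckerVector b := by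
  ext I
  rw [Pi.smul_apply, smul_eq_mul, plueckerVector, plueckerVector, ← Matrix.det_mul,
    Matrix.submatrix_mul T b id id I Function.bijective_id, Matrix.submatrix_id_id]

lemma norm_plueckerVector_vecCons_le [Fintype ι] (v : ι → ℤ) (b : Matrix (Fin j) ι ℤ) :
    ‖plueckerVector (Matrix.vecCons v b)‖ ≤ (j + 1) * ‖v‖ * ‖plueckerVector b‖ := by
  refine (pi_norm_le_iff_of_nonneg (by positivity)).2 fun I => ?_
  change ‖(Matrix.submatrix (Matrix.vecCons v b) id I).det‖ ≤ _
  rw [Matrix.det_succ_row_zero]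
  calc _ ≤ ∑ _ : Fin (j + 1), ‖v‖ * ‖plueckerVector b‖ := by
        refine norm_sum_le_of_le _ fun c _ => ?_
        rw [norm_mul, norm_mul, norm_pow, norm_neg, norm_one, one_pow, one_mul]
        exact mul_le_mul (norm_le_pi_norm v (I c))
          (norm_le_pi_norm (plueckerVector b) (I ∘ c.succAbove)) (norm_nonneg _) (norm_nonneg _)
    _ = _ := by simp [mul_assoc]

lemma plueckerVector_ne_zero {b : Matrix (Fin j) ι ℤ} (hb : LinearIndependent ℤ b.row) :
    plueckerVector b ≠ 0 := by
  induction j with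
  | zero => exact fun h => one_ne_zero (congrFun h Fin.elim0)
  | succ j ih =>
    obtain ⟨I, hI⟩ := Function.ne_iff.1 <|
      ih (b := b.submatrix Fin.succ id) (hb.comp _ (Fin.succ_injective j))
    intro h
    have hcol (i : ι) :
        ∑ a : Fin (j + 1), ((-1) ^ (a : ℕ) * ((b.submatrix a.succAbove I).det)) * b a i = 0 := by
      rw [← show plueckerVector b (Fin.cons i I) = 0 from congrFun h _, plueckerVector,
        Matrix.det_succ_column_zero]
      exact Finset.sum_congr rfl fun a _ => mul_right_comm _ _ _
    have h0 := Fintype.linearIndependent_iff.1 hb _ (funext fun i => by simpa using hcol i) 0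
    rw [Fin.val_zero, pow_zero, one_mul] at h0
    exact hI h0

lemma det_ne_zero_of_linearIndependent_mul {T : Matrix (Fin j) (Fin j) ℤ} {b : Matrix (Fin j) ι ℤ}
    (h : LinearIndependent ℤ (T * b).row) : T.det ≠ 0 := by
  intro h0
  obtain ⟨c, hc, hcT⟩ := Matrix.exists_vecMul_eq_zero_iff.2 h0
  refine hc (Matrix.vecMul_injective_iff.2 h ?_)
  simp only [← Matrix.vecMul_vecMul, hcT, Matrix.zero_vecMul]

end PlueckerCoordinates

section BasisWeight

variable {ι : Type*} [Fintype ι] {j : ℕ}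

lemma one_le_norm_mul_norm_intCast {e : ℤ} (he : e ≠ 0) : 1 ≤ ‖e‖ * ‖(e : ℚ_[p])‖ := by
  have hle : (p : ℝ) ^ padicValInt p e ≤ ‖e‖ := by
    rw [Int.norm_eq_abs, ← Int.cast_abs, ← Nat.cast_natAbs]
    exact_mod_cast Nat.le_of_dvd (Int.natAbs_pos.2 he) pow_padicValNat_dvd
  rw [Padic.norm_eq_zpow_neg_valuation (Int.cast_ne_zero.2 he), Padic.valuation_intCast, zpow_neg,
    zpow_natCast, ← div_eq_mul_inv]
  exact (one_le_div (pow_pos natCast_prime_pos _)).2 hle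

/-- The linear form `q ↦ q · Y` on integer vectors. -/
noncomputable def pairing (Y : ι → ℚ_[p]) : (ι → ℤ) →ₗ[ℤ] ℚ_[p] := Fintype.linearCombination ℤ Y

lemma pairing_apply (Y : ι → ℚ_[p]) (q : ι → ℤ) : pairing Y q = ∑ i, (q i : ℚ_[p]) * Y i := by
  simp only [pairing, Fintype.linearCombination_apply, zsmul_eq_mul]

lemma norm_pairing_le (Y : ι → ℚ_[p]) (q : ι → ℤ) : ‖pairing Y q‖ ≤ ‖Y‖ := by
  rw [pairing_apply]
  refine IsUltrametricDist.norm_sum_le_of_forall_le_of_nonneg (norm_nonneg _) fun i _ => ?_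
  rw [norm_mul]
  exact (mul_le_of_le_one_left (norm_nonneg _) (Padic.norm_int_le_one _)).trans
    (norm_le_pi_norm Y i)

lemma pairing_pairing_row (Y : ι → ℚ_[p]) (b : Matrix (Fin j) ι ℤ) (c : Fin j → ℤ) :
    pairing (pairing Y ∘ b.row) c = pairing Y (Matrix.vecMul c b) := by
  rw [Matrix.vecMul_eq_sum, map_sum, pairing, Fintype.linearCombination_apply]
  exact Finset.sum_congr rfl fun i _ => (map_smul _ _ _).symm

/-- The covolume, in `ℝ × ℚ_p`, of the lattice spanned by the rows `v_i` of `b`: the Archimedean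
size of `v₁ ∧ ⋯ ∧ v_j` times its `p`-adic size with respect to the linear form `Y`. The diagonal
flow is absorbed in `Y`, by a power of `p` as scalar factor. -/
noncomputable def basisWeight (b : Matrix (Fin j) ι ℤ) (Y : ι → ℚ_[p]) : ℝ :=
  ‖plueckerVector b‖ * max 1 ‖pairing Y ∘ b.row‖

lemma basisWeight_nonneg (b : Matrix (Fin j) ι ℤ) (Y : ι → ℚ_[p]) :
    0 ≤ basisWeight b Y := by
  unfold basisWeight; positivity

lemma norm_pairing_row_le_mul (Y : ι → ℚ_[p]) {T : Matrix (Fin j) (Fin j) ℤ}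
    (hT : T.det ≠ 0) (b : Matrix (Fin j) ι ℤ) :
    ‖pairing Y ∘ b.row‖ ≤ ‖T.det‖ * ‖pairing Y ∘ (T * b).row‖ := by
  refine (pi_norm_le_iff_of_nonneg (by positivity)).2 fun l => ?_
  have hdet : T.det • b l = Matrix.vecMul (T.adjugate l) (T * b) := by
    rw [← Matrix.mul_apply_eq_vecMul, ← Matrix.mul_assoc, Matrix.adjugate_mul, Matrix.smul_mul,
      Matrix.one_mul]
    rfl
  calc ‖pairing Y (b l)‖ ≤ ‖T.det‖ * ‖(T.det : ℚ_[p])‖ * ‖pairing Y (b l)‖ :=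
        le_mul_of_one_le_left (norm_nonneg _) (one_le_norm_mul_norm_intCast hT)
    _ = ‖T.det‖ * ‖pairing Y (T.det • b l)‖ := by
        rw [map_smul, zsmul_eq_mul, norm_mul, mul_assoc]
    _ ≤ _ := by
        rw [hdet, ← pairing_pairing_row]
        gcongr
        exact norm_pairing_le _ _

lemma basisWeight_le_mul {T : Matrix (Fin j) (Fin j) ℤ} (hT : T.det ≠ 0)
    (b : Matrix (Fin j) ι ℤ) (Y : ι → ℚ_[p]) : basisWeight b Y ≤ basisWeight (T * b) Y := by
  have h1 : 1 ≤ ‖T.det‖ := by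
    rw [Int.norm_eq_abs]; exact_mod_cast Int.one_le_abs hT
  have hmax : max 1 ‖pairing Y ∘ b.row‖ ≤
      ‖T.det‖ * max 1 ‖pairing Y ∘ (T * b).row‖ := by
    refine max_le (one_le_mul_of_one_le_of_one_le h1 (le_max_left _ _)) ?_
    exact (norm_pairing_row_le_mul Y hT b).trans
      (mul_le_mul_of_nonneg_left (le_max_right _ _) (norm_nonneg _))
  rw [basisWeight, basisWeight, plueckerVector_mul, norm_smul, mul_comm ‖T.det‖, mul_assoc]
  gcongr

lemma basisWeight_le_of_row_mem_span {b b' : Matrix (Fin j) ι ℤ} (Y : ι → ℚ_[p])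
    (hb : LinearIndependent ℤ b.row) (h : ∀ i, b i ∈ Submodule.span ℤ (Set.range b'.row)) :
    basisWeight b' Y ≤ basisWeight b Y := by
  choose T hT using fun i => (Submodule.mem_span_range_iff_exists_fun ℤ).1 (h i)
  obtain rfl : b = Matrix.of T * b' := by
    ext i : 1
    rw [← hT i, Matrix.mul_apply_eq_vecMul, Matrix.vecMul_eq_sum]
    rfl
  exact basisWeight_le_mul (det_ne_zero_of_linearIndependent_mul hb) b' Y

lemma basisWeight_vecCons_le (v : ι → ℤ) (b : Matrix (Fin j) ι ℤ) (Y : ι → ℚ_[p])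
    (hv : ‖pairing Y v‖ ≤ 1) :
    basisWeight (Matrix.vecCons v b) Y ≤ (j + 1) * ‖v‖ * basisWeight b Y := by
  have hmax : ‖pairing Y ∘ Matrix.row (Matrix.vecCons v b)‖ ≤ max 1 ‖pairing Y ∘ b.row‖ := by
    refine (pi_norm_le_iff_of_nonneg (by positivity)).2 fun i => ?_
    refine Fin.cases (le_max_of_le_left hv) (fun i => le_max_of_le_right ?_) i
    exact norm_le_pi_norm (pairing Y ∘ b.row) i
  calc basisWeight (Matrix.vecCons v b) Y
      ≤ ((j + 1) * ‖v‖ * ‖plueckerVector b‖) * max 1 ‖pairing Y ∘ b.row‖ :=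
        mul_le_mul (norm_plueckerVector_vecCons_le v b) (max_le (le_max_left _ _) hmax)
          (by positivity) (by positivity)
    _ = _ := mul_assoc _ _ _

lemma basisWeight_le_of_norm_sub_le (b : Matrix (Fin j) ι ℤ) {Y Y' : ι → ℚ_[p]}
    (h : ‖Y - Y'‖ ≤ 1) : basisWeight b Y ≤ basisWeight b Y' := by
  refine mul_le_mul_of_nonneg_left (max_le (le_max_left _ _) ?_) (norm_nonneg _)
  refine (pi_norm_le_iff_of_nonneg (by positivity)).2 fun i => ?_
  have hsub : pairing Y (b i) = pairing (Y - Y') (b i) + pairing Y' (b i) := by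
    simp only [pairing_apply, Pi.sub_apply, ← Finset.sum_add_distrib, mul_sub, sub_add_cancel]
  rw [Function.comp_apply, Matrix.row, hsub]
  exact (IsUltrametricDist.norm_add_le_max _ _).trans <|
    max_le_max ((norm_pairing_le _ _).trans h) (norm_le_pi_norm (pairing Y' ∘ b.row) i)

end BasisWeight

section SaturatedSubmodules

variable {R M : Type*} [CommRing R] [AddCommGroup M] [Module R M]

lemma linearIndependent_coe_basis {κ : Type*} {G : Submodule R M} (b : Module.Basis κ R G) :
    LinearIndependent R fun i => (b i : M) :=
  b.linearIndependent.map' G.subtype (Submodule.ker_subtype G)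

lemma span_coe_basis {κ : Type*} {G : Submodule R M} (b : Module.Basis κ R G) :
    Submodule.span R (Set.range fun i => (b i : M)) = G := by
  have h := congrArg (Submodule.map G.subtype) b.span_eq
  rwa [Submodule.map_span, ← Set.range_comp, Submodule.map_subtype_top] at h

/-- A submodule is saturated if it contains every vector that has a nonzero multiple in it; these
are the primitive sublattices when `R = ℤ`. -/
def IsSaturated (G : Submodule R M) : Prop :=
  ∀ ⦃a : R⦄, a ≠ 0 → ∀ ⦃v : M⦄, a • v ∈ G → v ∈ G

lemma IsSaturated.linearIndependent_finCons {G : Submodule R M} (hG : IsSaturated G) {v : M}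
    (hv : v ∉ G) {m : ℕ} (b : Module.Basis (Fin m) R G) :
    LinearIndependent R (Fin.cons v fun i => (b i : M) : Fin (m + 1) → M) := by
  refine (linearIndependent_coe_basis b).finCons' _ _ fun c y hy hcy => ?_
  rw [span_coe_basis] at hy
  by_contra hc
  exact hv (hG hc (eq_neg_of_add_eq_zero_left hcy ▸ G.neg_mem hy))

variable [IsDomain R]

lemma isSaturated_bot [Module.IsTorsionFree R M] : IsSaturated (⊥ : Submodule R M) := by
  intro a ha v hv
  rw [Submodule.mem_bot] at hv ⊢
  exact (smul_eq_zero.1 hv).resolve_left ha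

/-- The smallest saturated submodule containing `H`. -/
def saturation (H : Submodule R M) : Submodule R M where
  carrier := {v | ∃ a : R, a ≠ 0 ∧ a • v ∈ H}
  zero_mem' := ⟨1, one_ne_zero, by rw [smul_zero]; exact H.zero_mem⟩
  add_mem' := by
    rintro v w ⟨a, ha, hv⟩ ⟨b, hb, hw⟩
    refine ⟨a * b, mul_ne_zero ha hb, ?_⟩
    rw [smul_add]
    refine H.add_mem ?_ ?_
    · rw [mul_comm, mul_smul]; exact H.smul_mem b hv
    · rw [mul_smul]; exact H.smul_mem a hw
  smul_mem' := by
    rintro c v ⟨a, ha, hv⟩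
    exact ⟨a, ha, smul_comm c a v ▸ H.smul_mem c hv⟩

lemma isSaturated_saturation (H : Submodule R M) : IsSaturated (saturation H) := by
  rintro a ha v ⟨b, hb, hv⟩
  exact ⟨b * a, mul_ne_zero hb ha, by rwa [mul_smul]⟩

lemma le_saturation (H : Submodule R M) : H ≤ saturation H :=
  fun v hv => ⟨1, one_ne_zero, by rwa [one_smul]⟩

lemma IsSaturated.saturation_le {G H : Submodule R M} (hG : IsSaturated G) (h : H ≤ G) :
    saturation H ≤ G := by
  rintro v ⟨a, ha, hv⟩
  exact hG ha (h hv)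

variable [IsPrincipalIdealRing R] [Module.Free R M] [Module.Finite R M]

lemma finrank_saturation (H : Submodule R M) :
    Module.finrank R (saturation H) = Module.finrank R H := by
  refine le_antisymm ?_ (Submodule.finrank_mono (le_saturation H))
  set b := Module.finBasis R (saturation H)
  choose a ha hmem using fun i => (b i).2
  have hli : LinearIndependent R fun i => (⟨a i • (b i : M), hmem i⟩ : H) := by
    refine LinearIndependent.of_comp H.subtype (Fintype.linearIndependent_iff.2 fun g hg i => ?_)
    have hg' : ∑ i, (g i * a i) • (b i : M) = 0 := by simpa only [mul_smul] using! hg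
    have := Fintype.linearIndependent_iff.1 (linearIndependent_coe_basis b) _ hg' i
    exact (mul_eq_zero.1 this).resolve_right (ha i)
  simpa only [Fintype.card_fin] using hli.fintype_card_le_finrank

lemma IsSaturated.finrank_sup_span_singleton {G : Submodule R M} (hG : IsSaturated G) {v : M}
    (hv : v ∉ G) :
    Module.finrank R ↥(G ⊔ Submodule.span R {v}) = Module.finrank R G + 1 := by
  have h := finrank_span_eq_card (hG.linearIndependent_finCons hv (Module.finBasis R G))
  rwa [Fin.range_cons, Submodule.span_insert, span_coe_basis, sup_comm, Fintype.card_fin] at h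

lemma IsSaturated.finrank_lt {G G' : Submodule R M} (hG : IsSaturated G) (h : G < G') :
    Module.finrank R G < Module.finrank R G' := by
  obtain ⟨hle, v, hvG', hvG⟩ := SetLike.lt_iff_le_and_exists.1 h
  rw [← Nat.add_one_le_iff, ← hG.finrank_sup_span_singleton hvG]
  exact Submodule.finrank_mono (sup_le hle ((Submodule.span_singleton_le_iff_mem v G').2 hvG'))

end SaturatedSubmodules

section LatticeWeight

variable {ι : Type*} [Fintype ι]

/-- The weight of a sublattice of `ℤ ^ ι`, computed from a basis; the choice of basis does not
matter by `latticeWeight_le_basisWeight`. -/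
noncomputable def latticeWeight (G : Submodule ℤ (ι → ℤ)) (Y : ι → ℚ_[p]) : ℝ :=
  basisWeight (Matrix.of fun i => (Module.finBasis ℤ G i : ι → ℤ)) Y

lemma latticeWeight_le_basisWeight {G : Submodule ℤ (ι → ℤ)} (Y : ι → ℚ_[p]) {j : ℕ}
    (hj : Module.finrank ℤ G = j) {b : Matrix (Fin j) ι ℤ} (hb : LinearIndependent ℤ b.row)
    (h : ∀ i, b i ∈ G) : latticeWeight G Y ≤ basisWeight b Y := by
  subst hj
  refine basisWeight_le_of_row_mem_span Y hb fun i => ?_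
  exact (span_coe_basis (Module.finBasis ℤ G)).symm ▸ h i

lemma latticeWeight_bot_le_one (Y : ι → ℚ_[p]) : latticeWeight ⊥ Y ≤ 1 := by
  refine (latticeWeight_le_basisWeight (b := Matrix.of Fin.elim0) Y (finrank_bot ℤ _)
    linearIndependent_empty_type fun i => i.elim0).trans_eq ?_
  rw [basisWeight, Subsingleton.elim (pairing Y ∘ Matrix.row _) 0, norm_zero,
    max_eq_left zero_le_one, mul_one]
  have hone : plueckerVector (Matrix.of (Fin.elim0 : Fin 0 → ι → ℤ)) = 1 :=
    funext fun I => Matrix.det_isEmpty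
  rw [hone, norm_one]

lemma latticeWeight_saturation_sup_le {G : Submodule ℤ (ι → ℤ)} (hG : IsSaturated G)
    {v : ι → ℤ} (hv : v ∉ G) (Y : ι → ℚ_[p]) (hvY : ‖pairing Y v‖ ≤ 1) :
    latticeWeight (saturation (G ⊔ Submodule.span ℤ {v})) Y ≤
      Fintype.card ι * ‖v‖ * latticeWeight G Y := by
  set b := Module.finBasis ℤ G
  have hrank := (finrank_saturation _).trans (hG.finrank_sup_span_singleton hv)
  have hmem (i : Fin (Module.finrank ℤ G + 1)) :
      Matrix.vecCons v (fun i => (b i : ι → ℤ)) i ∈ saturation (G ⊔ Submodule.span ℤ {v}) := by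
    refine le_saturation _ (Fin.cases ?_ (fun i => ?_) i)
    · exact Submodule.mem_sup_right (Submodule.mem_span_singleton_self v)
    · exact Submodule.mem_sup_left (b i).2
  have hcard : (Module.finrank ℤ G + 1 : ℝ) ≤ Fintype.card ι := by
    rw [← Module.finrank_fintype_fun_eq_card ℤ]
    exact_mod_cast hrank ▸ Submodule.finrank_le (saturation (G ⊔ Submodule.span ℤ {v}))
  calc _ ≤ _ := latticeWeight_le_basisWeight Y hrank (hG.linearIndependent_finCons hv b) hmem
    _ ≤ _ := basisWeight_vecCons_le v _ Y hvY
    _ ≤ _ := by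
        gcongr
        · exact basisWeight_nonneg _ _
        · exact le_rfl

end LatticeWeight

section Minkowski

variable {κ : Type*} [Fintype κ]

lemma exists_norm_apply_eq_norm [Nonempty κ] {E : Type*} [SeminormedAddGroup E] (f : κ → E) :
    ∃ i, ‖f i‖ = ‖f‖ := by
  obtain ⟨i, hi⟩ := Finite.exists_max fun i => ‖f i‖
  exact ⟨i, (norm_le_pi_norm f i).antisymm ((pi_norm_le_iff_of_nonempty f).2 hi)⟩

lemma index_range_eq_natAbs_det {M : Type*} [AddCommGroup M] [Module.Free ℤ M] [Module.Finite ℤ M]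
    {f : M →ₗ[ℤ] M} (hf : Function.Injective f) :
    f.toAddMonoidHom.range.index = (LinearMap.det f).natAbs :=
  (Submodule.natAbs_det_equiv (LinearMap.range f) (LinearEquiv.ofInjective f hf)).symm

lemma det_vecMulLinear {R : Type*} [CommRing R] [DecidableEq κ] (B : Matrix κ κ R) :
    LinearMap.det B.vecMulLinear = B.det := by
  have h := Matrix.vecMulLinear_transpose B.transpose
  rw [Matrix.transpose_transpose] at h
  rw [h, ← Matrix.toLin'_apply', LinearMap.det_toLin', Matrix.det_transpose]

lemma exists_ne_zero_mem_norm_le_of_index_lt {L : AddSubgroup (κ → ℤ)} (hL : L.index ≠ 0) {R : ℕ}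
    (hR : L.index < (R + 1) ^ Fintype.card κ) : ∃ w ∈ L, w ≠ 0 ∧ ‖w‖ ≤ R := by
  classical
  have : L.FiniteIndex := ⟨hL⟩
  have : Fintype ((κ → ℤ) ⧸ L) := Fintype.ofFinite _
  let box (x : κ → Fin (R + 1)) : κ → ℤ := fun i => (x i : ℕ)
  have hcard : Fintype.card ((κ → ℤ) ⧸ L) < Fintype.card (κ → Fin (R + 1)) := by
    rwa [← Nat.card_eq_fintype_card, Fintype.card_fun, Fintype.card_fin]
  obtain ⟨x, x', hne, hxx'⟩ := Fintype.exists_ne_map_eq_of_card_lt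
    (fun x => (box x : (κ → ℤ) ⧸ L)) hcard
  refine ⟨-box x + box x', QuotientAddGroup.eq.1 hxx', fun h => hne (funext fun i => ?_), ?_⟩
  · exact Fin.ext (Int.ofNat_inj.1 (congrFun (neg_add_eq_zero.1 h) i))
  · refine (pi_norm_le_iff_of_nonneg R.cast_nonneg).2 fun i => ?_
    rw [Int.norm_eq_abs]
    have h : |-((x i : ℕ) : ℤ) + (x' i : ℕ)| ≤ R := by
      rw [abs_le]; omega
    exact_mod_cast h

lemma exists_max_one_norm_eq_pow (y : κ → ℚ_[p]) : ∃ e : ℕ, max 1 ‖y‖ = (p : ℝ) ^ e := by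
  rcases le_or_gt ‖y‖ 1 with h | h
  · exact ⟨0, by rw [max_eq_left h, pow_zero]⟩
  have : Nonempty κ := by
    by_contra! hκ
    rw [Subsingleton.elim y 0, norm_zero] at h
    exact zero_le_one.not_gt h
  obtain ⟨i, hi⟩ := exists_norm_apply_eq_norm y
  have hyi : y i ≠ 0 := norm_pos_iff.1 (hi ▸ zero_lt_one.trans h)
  rw [max_eq_right h.le, ← hi]
  rw [← hi, Padic.norm_eq_zpow_neg_valuation hyi, one_lt_zpow_iff_right₀ one_lt_natCast_prime] at h
  obtain ⟨e, he⟩ := Int.eq_ofNat_of_zero_le h.le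
  exact ⟨e, by rw [Padic.norm_eq_zpow_neg_valuation hyi, he, zpow_natCast]⟩

lemma exists_addSubgroup_index_le_norm_pairing_le_one (y : κ → ℚ_[p]) :
    ∃ K : AddSubgroup (κ → ℤ), K.index ≠ 0 ∧ (K.index : ℝ) ≤ max 1 ‖y‖ ∧
      ∀ c ∈ K, ‖pairing y c‖ ≤ 1 := by
  obtain ⟨e, he⟩ := exists_max_one_norm_eq_pow y
  have hpe : 0 < (p : ℝ) ^ e := pow_pos natCast_prime_pos e
  have hnorm (x : ℚ_[p]) : ‖(p : ℚ_[p]) ^ e * x‖ = ((p : ℝ) ^ e)⁻¹ * ‖x‖ := by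
    rw [norm_mul, Padic.norm_p_pow, zpow_neg, zpow_natCast]
  have hint (c : κ → ℤ) : ‖(p : ℚ_[p]) ^ e * pairing y c‖ ≤ 1 := by
    rw [hnorm, inv_mul_le_one₀ hpe, ← he]
    exact (norm_pairing_le y c).trans (le_max_right _ _)
  let φ : (κ → ℤ) →+ ℤ_[p] :=
    { toFun := fun c => ⟨(p : ℚ_[p]) ^ e * pairing y c, hint c⟩
      map_zero' := Subtype.ext (by simp [map_zero])
      map_add' := fun c c' => Subtype.ext <|
        (congrArg ((p : ℚ_[p]) ^ e * ·) (map_add (pairing y) c c')).trans (mul_add _ _ _) }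
  let ψ : (κ → ℤ) →+ ZMod (p ^ e) := (PadicInt.toZModPow e).toAddMonoidHom.comp φ
  have : NeZero (p ^ e) := ⟨pow_ne_zero e (Fact.out : p.Prime).ne_zero⟩
  refine ⟨ψ.ker, ?_, ?_, fun c hc => ?_⟩
  · rw [AddSubgroup.index_ker]
    exact Nat.card_pos.ne'
  · rw [he, AddSubgroup.index_ker]
    have h := Nat.card_le_card_of_injective _ (Subtype.val_injective (p := (· ∈ ψ.range)))
    rw [Nat.card_zmod] at h
    exact_mod_cast h
  · have hker : φ c ∈ RingHom.ker (PadicInt.toZModPow (p := p) e) := hc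
    rw [PadicInt.ker_toZModPow, ← PadicInt.norm_le_pow_iff_mem_span_pow, PadicInt.norm_def,
      zpow_neg, zpow_natCast] at hker
    exact (mul_le_iff_le_one_right (inv_pos.2 hpe)).1 ((hnorm _).symm.trans_le hker)

lemma det_mul_vecMul_apply {R ι : Type*} [CommRing R] [DecidableEq κ] (b : Matrix κ ι R)
    (I : κ → ι) (c : κ → R) (l : ι) :
    (b.submatrix id I).det * Matrix.vecMul c b l =
      ∑ m, Matrix.vecMul c (b.submatrix id I) m *
        (b.submatrix id (Function.update I m l)).det := by
  set B := b.submatrix id I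
  have hcramer (m : κ) : (b.submatrix id (Function.update I m l)).det =
      B.adjugate.mulVec (b.col l) m := by
    rw [← Matrix.cramer_eq_adjugate_mulVec, Matrix.cramer_apply]
    congr 1
    ext u v
    rcases eq_or_ne v m with rfl | hv
    · simp
    · simp [hv, B]
  calc B.det * Matrix.vecMul c b l
      = dotProduct c ((B.det • (1 : Matrix κ κ R)).mulVec (b.col l)) := by
        rw [Matrix.smul_mulVec, Matrix.one_mulVec, dotProduct_smul]; rfl
    _ = dotProduct (Matrix.vecMul c B) (B.adjugate.mulVec (b.col l)) := by
        rw [← Matrix.mul_adjugate, ← Matrix.mulVec_mulVec, Matrix.dotProduct_mulVec]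
    _ = _ := Finset.sum_congr rfl fun m _ => by rw [hcramer]

variable {ι : Type*} [Fintype ι] {j : ℕ}

lemma norm_vecMul_le_of_maximal_minor {b : Matrix (Fin j) ι ℤ} {I : Fin j → ι}
    (hI : ‖plueckerVector b I‖ = ‖plueckerVector b‖) (h0 : plueckerVector b I ≠ 0)
    (c : Fin j → ℤ) : ‖Matrix.vecMul c b‖ ≤ j * ‖Matrix.vecMul c (b.submatrix id I)‖ := by
  refine (pi_norm_le_iff_of_nonneg (by positivity)).2 fun l => ?_
  refine le_of_mul_le_mul_left ?_ (norm_pos_iff.2 h0)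
  calc ‖plueckerVector b I‖ * ‖Matrix.vecMul c b l‖
      = ‖∑ m, Matrix.vecMul c (b.submatrix id I) m *
          plueckerVector b (Function.update I m l)‖ := by
        rw [← norm_mul]; exact congrArg _ (det_mul_vecMul_apply b I c l)
    _ ≤ ∑ _m : Fin j, ‖Matrix.vecMul c (b.submatrix id I)‖ * ‖plueckerVector b I‖ := by
        refine norm_sum_le_of_le _ fun m _ => ?_
        rw [norm_mul, hI]
        gcongr <;> exact norm_le_pi_norm _ _
    _ = _ := by
        rw [Finset.sum_const, Finset.card_fin, nsmul_eq_mul]; ring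

lemma exists_ne_zero_norm_le_of_basisWeight_lt {b : Matrix (Fin j) ι ℤ}
    (hb : LinearIndependent ℤ b.row) (Y : ι → ℚ_[p]) {R : ℕ}
    (hR : basisWeight b Y < ((R : ℝ) + 1) ^ j) :
    ∃ q : ι → ℤ, q ≠ 0 ∧ ‖pairing Y q‖ ≤ 1 ∧ ‖q‖ ≤ j * R := by
  have hb0 := plueckerVector_ne_zero hb
  have : Nonempty (Fin j → ι) := (Function.ne_iff.1 hb0).nonempty
  obtain ⟨I, hI⟩ := exists_norm_apply_eq_norm (plueckerVector b)
  have hI0 : plueckerVector b I ≠ 0 := norm_pos_iff.1 (hI ▸ norm_pos_iff.2 hb0)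
  set B := b.submatrix id I
  have hdet : ((LinearMap.det B.vecMulLinear).natAbs : ℝ) = ‖plueckerVector b‖ := by
    rw [← hI, det_vecMulLinear, Int.norm_eq_abs, Nat.cast_natAbs, Int.cast_abs]
    rfl
  have hinj : Function.Injective B.vecMulLinear := by
    rw [← LinearMap.ker_eq_bot, LinearMap.ker_eq_bot']
    exact fun c hc => by_contra fun hc0 => hI0 (Matrix.exists_vecMul_eq_zero_iff.1 ⟨c, hc0, hc⟩)
  obtain ⟨K, hK0, hK, hKY⟩ := exists_addSubgroup_index_le_norm_pairing_le_one (pairing Y ∘ b.row)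
  set L := K.map B.vecMulLinear.toAddMonoidHom
  have hindex : (L.index : ℝ) = K.index * ‖plueckerVector b‖ := by
    rw [AddSubgroup.index_map_of_injective _ hinj, index_range_eq_natAbs_det hinj, Nat.cast_mul,
      hdet]
  have hL0 : L.index ≠ 0 := by
    rw [← Nat.cast_ne_zero (R := ℝ), hindex]
    exact mul_ne_zero (Nat.cast_ne_zero.2 hK0) (norm_ne_zero_iff.2 hb0)
  have hLR : L.index < (R + 1) ^ Fintype.card (Fin j) := by
    rw [Fintype.card_fin, ← Nat.cast_lt (α := ℝ), hindex, Nat.cast_pow, Nat.cast_succ]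
    refine lt_of_le_of_lt ?_ hR
    rw [mul_comm]
    exact mul_le_mul_of_nonneg_left hK (norm_nonneg _)
  obtain ⟨_, ⟨c, hc, rfl⟩, hw0, hwR⟩ := exists_ne_zero_mem_norm_le_of_index_lt hL0 hLR
  refine ⟨Matrix.vecMul c b, fun h => hw0 ?_, ?_, ?_⟩
  · exact funext fun i => congrFun h (I i)
  · rw [← pairing_pairing_row]
    exact hKY c hc
  · exact (norm_vecMul_le_of_maximal_minor hI hI0 c).trans (by gcongr; exact hwR)

end Minkowski

section QuantitativeNondivergence

variable {ι : Type*}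

section SaturatedLattice

/-- The poset of the nonzero saturated sublattices of `ℤ ^ ι`, in which the chains of the
nondivergence argument live. -/
abbrev SaturatedLattice (ι : Type*) := {G : Submodule ℤ (ι → ℤ) // IsSaturated G ∧ G ≠ ⊥}

variable [Finite ι]

lemma strictMono_finrank_saturatedLattice :
    StrictMono fun G : SaturatedLattice ι => Module.finrank ℤ G.1 :=
  fun G _ h => G.2.1.finrank_lt h

lemma exists_isSaturated_isMax_notMem {F : Set (SaturatedLattice ι)} (hF : IsChain (· ≤ ·) F)
    {v : ι → ℤ} (hv : v ≠ 0) :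
    ∃ W : Submodule ℤ (ι → ℤ), IsSaturated W ∧ v ∉ W ∧ (W = ⊥ ∨ ∃ G ∈ F, W = G.1) ∧
      ∀ G ∈ F, (v ∈ G.1 → W ≤ G.1) ∧ (v ∉ G.1 → G.1 ≤ W) := by
  by_cases hS : ∃ G ∈ F, v ∉ G.1
  · obtain ⟨W, ⟨hWF, hvW⟩, hmax⟩ := wellFounded_gt.has_min {G ∈ F | v ∉ G.1} hS
    refine ⟨W.1, W.2.1, hvW, .inr ⟨W, hWF, rfl⟩, fun G hG => ⟨fun hvG => ?_, fun hvG => ?_⟩⟩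
    · exact (hF.total hWF hG).resolve_right fun h => hvW (h hvG)
    · rcases hF.total hWF hG with h | h
      · exact (h.eq_of_not_lt (hmax G ⟨hG, hvG⟩)).ge
      · exact h
  · push Not at hS
    exact ⟨⊥, isSaturated_bot, mt (Submodule.mem_bot ℤ).1 hv, .inl rfl,
      fun G hG => ⟨fun _ => bot_le, fun h => absurd (hS G hG) h⟩⟩

end SaturatedLattice

variable [Fintype ι]

lemma pow_finrank_le_latticeWeight {Y : ι → ℚ_[p]} {ρ : ℝ} (hρ : 0 < ρ)
    (h : ∀ q : ι → ℤ, q ≠ 0 → ‖pairing Y q‖ ≤ 1 → Fintype.card ι * ρ ≤ ‖q‖)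
    (G : Submodule ℤ (ι → ℤ)) : ρ ^ Module.finrank ℤ G ≤ latticeWeight G Y := by
  by_contra! hG
  obtain ⟨R, hR⟩ := Nat.exists_eq_add_one.2 (Nat.ceil_pos.2 hρ)
  have hRρ : (R : ℝ) < ρ := Nat.lt_ceil.1 (hR ▸ Nat.lt_succ_self R)
  have hρR : ρ ≤ R + 1 := by exact_mod_cast hR ▸ Nat.le_ceil ρ
  obtain ⟨q, hq0, hqY, hqR⟩ := exists_ne_zero_norm_le_of_basisWeight_lt
    (linearIndependent_coe_basis (Module.finBasis ℤ G)) Y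
    (hG.trans_le (pow_le_pow_left₀ hρ.le hρR _))
  have hrank : Module.finrank ℤ G ≤ Fintype.card ι :=
    (Submodule.finrank_le G).trans_eq (Module.finrank_fintype_fun_eq_card ℤ)
  have hcard : 0 < Fintype.card ι := by
    obtain ⟨i, -⟩ := Function.ne_iff.1 hq0
    exact Fintype.card_pos_iff.2 ⟨i⟩
  refine (h q hq0 hqY).not_gt (hqR.trans_lt ?_)
  calc (Module.finrank ℤ G : ℝ) * R ≤ Fintype.card ι * R := by gcongr
    _ < Fintype.card ι * ρ := by gcongr

lemma finrank_saturatedLattice_mem_Icc (G : SaturatedLattice ι) :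
    Module.finrank ℤ G.1 ∈ Finset.Icc 1 (Fintype.card ι) := by
  refine Finset.mem_Icc.2 ⟨?_, ?_⟩
  · exact (Nat.zero_le _).trans_lt (isSaturated_bot.finrank_lt (bot_lt_iff_ne_bot.2 G.2.2))
  · exact (Submodule.finrank_le G.1).trans_eq (Module.finrank_fintype_fun_eq_card ℤ)

lemma mul_le_card_mul_norm_of_isProtected {X : Type*} {x : X} {Y : X → ι → ℚ_[p]} {ρ ε : ℝ}
    (hρ : 0 < ρ) (hε : ε ≤ 1)
    (hx : IsProtected (fun (G : SaturatedLattice ι) x => latticeWeight G.1 (Y x))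
      (fun G => ρ ^ Module.finrank ℤ G.1) ε ∅ x)
    {v : ι → ℤ} (hv : v ≠ 0) (hvY : ‖pairing (Y x) v‖ ≤ 1) : ε * ρ ≤ Fintype.card ι * ‖v‖ := by
  obtain ⟨F, -, hF, hmem, hext⟩ := hx
  obtain ⟨W, hW, hvW, hWF, hWmax⟩ := exists_isSaturated_isMax_notMem hF hv
  have hWle : latticeWeight W (Y x) ≤ ρ ^ Module.finrank ℤ W := by
    rcases hWF with rfl | ⟨G, hG, rfl⟩
    · rw [finrank_bot, pow_zero]
      exact latticeWeight_bot_le_one (Y x)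
    · exact (hmem G hG (Set.notMem_empty G)).2.le
  set H := saturation (W ⊔ Submodule.span ℤ {v})
  have hWH : W ≤ H := le_sup_left.trans (le_saturation _)
  have hvH : v ∈ H :=
    le_saturation _ (Submodule.mem_sup_right (Submodule.mem_span_singleton_self v))
  have hH0 : H ≠ ⊥ := fun h => hv ((Submodule.mem_bot ℤ).1 (h ▸ hvH))
  have hHle : ε * ρ ^ (Module.finrank ℤ W + 1) ≤ latticeWeight H (Y x) := by
    rw [← hW.finrank_sup_span_singleton hvW, ← finrank_saturation]
    by_cases hHF : ⟨H, isSaturated_saturation _, hH0⟩ ∈ F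
    · exact (hmem _ hHF (Set.notMem_empty _)).1
    refine (mul_le_of_le_one_left (by positivity) hε).trans
      (hext ⟨H, isSaturated_saturation _, hH0⟩ ⟨hHF, fun G hG => ?_⟩)
    by_cases hvG : v ∈ G.1
    · exact .inl <| G.2.1.saturation_le <| sup_le ((hWmax G hG).1 hvG)
        ((Submodule.span_singleton_le_iff_mem v G.1).2 hvG)
    · exact .inr (((hWmax G hG).2 hvG).trans hWH)
  refine le_of_mul_le_mul_right ?_ (pow_pos hρ (Module.finrank ℤ W))
  calc ε * ρ * ρ ^ Module.finrank ℤ W = ε * ρ ^ (Module.finrank ℤ W + 1) := by ring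
    _ ≤ latticeWeight H (Y x) := hHle
    _ ≤ Fintype.card ι * ‖v‖ * latticeWeight W (Y x) := latticeWeight_saturation_sup_le hW hvW _ hvY
    _ ≤ Fintype.card ι * ‖v‖ * ρ ^ Module.finrank ℤ W := by gcongr

lemma measure_latticeWeight_lt_le (μ : Measure ℚ_[p]) [μ.IsAddLeftInvariant]
    {F : ℚ_[p] → ι → ℚ_[p]} {N : ℕ}
    (hF : ∀ c : ι → ℚ_[p], HasRemezInequality N fun s => ∑ i, c i * F s i)
    (s : ℕ) (G : Submodule ℤ (ι → ℤ)) {a x₁ : ℚ_[p]} (ha : ‖a‖ ≤ 1) {m : ℕ}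
    (hx₁ : x₁ ∈ padicBall a m) {θ : ℝ} (hθ : θ ≤ latticeWeight G (F x₁)) :
    μ {x ∈ padicBall a m | latticeWeight G (F x) < ((p : ℝ) ^ (s * N))⁻¹ * θ} ≤
      N * ((p : ℝ≥0∞) ^ s)⁻¹ * μ (padicBall a m) := by
  have hp1 : 1 ≤ (p : ℝ) := one_lt_natCast_prime.le
  set ε := ((p : ℝ) ^ (s * N))⁻¹
  have hε1 : ε ≤ 1 := inv_le_one_of_one_le₀ (one_le_pow₀ hp1)
  set b := Module.finBasis ℤ G
  set B : Matrix (Fin (Module.finrank ℤ G)) ι ℤ := Matrix.of fun i => (b i : ι → ℤ)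
  have hlt {x : ℚ_[p]} (hx : latticeWeight G (F x) < ε * θ) :
      max 1 ‖pairing (F x) ∘ B.row‖ < ε * max 1 ‖pairing (F x₁) ∘ B.row‖ := by
    refine lt_of_mul_lt_mul_left ?_ (norm_nonneg (plueckerVector B))
    calc _ < ε * θ := hx
      _ ≤ ε * latticeWeight G (F x₁) := by gcongr
      _ = _ := mul_left_comm _ _ _
  rcases le_or_gt ‖pairing (F x₁) ∘ B.row‖ 1 with h | h
  · rw [Set.sep_eq_empty_iff_mem_false.2 fun x _ hx => ?_, measure_empty]
    · exact zero_le
    · have hx' := hlt hx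
      rw [max_eq_left h, mul_one] at hx'
      exact (le_max_left 1 _).not_gt (hx'.trans_le hε1)
  have : Nonempty (Fin (Module.finrank ℤ G)) := by
    by_contra! hempty
    rw [Subsingleton.elim (pairing (F x₁) ∘ B.row) 0, norm_zero] at h
    exact zero_le_one.not_gt h
  obtain ⟨i, hi⟩ := exists_norm_apply_eq_norm (pairing (F x₁) ∘ B.row)
  refine (measure_mono ?_).trans ((hF fun l => (B i l : ℚ_[p])).measure_lt_le μ ha s hx₁)
  refine fun x ⟨hx, hxlt⟩ => ⟨hx, ?_⟩
  rw [← pairing_apply, ← pairing_apply]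
  calc ‖pairing (F x) (B i)‖ ≤ max 1 ‖pairing (F x) ∘ B.row‖ :=
        (norm_le_pi_norm (pairing (F x) ∘ B.row) i).trans (le_max_right _ _)
    _ < ε * max 1 ‖pairing (F x₁) ∘ B.row‖ := hlt hxlt
    _ = ε * ‖pairing (F x₁) (B i)‖ := by rw [max_eq_right h.le, ← hi]; rfl

lemma exists_latticeWeight_eq_of_mem_padicBall {F : ℚ_[p] → ι → ℚ_[p]}
    (hF : ContinuousOn F (closedBall 0 1)) :
    ∃ m : ℕ, ∀ G : Submodule ℤ (ι → ℤ), ∀ a, ‖a‖ ≤ 1 → ∀ x ∈ padicBall a m,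
      latticeWeight G (F x) = latticeWeight G (F a) := by
  obtain ⟨δ, hδ, h⟩ := Metric.uniformContinuousOn_iff.1
    ((isCompact_closedBall (0 : ℚ_[p]) 1).uniformContinuousOn_of_continuous hF) 1 one_pos
  obtain ⟨m, hm⟩ := exists_pow_lt_of_lt_one hδ 
    (inv_lt_one_of_one_lt₀ (one_lt_natCast_prime (p := p)))
  refine ⟨m, fun G a ha x hx => ?_⟩
  have hdist : ‖F x - F a‖ ≤ 1 := by
    rw [← dist_eq_norm]
    refine (h x ?_ a ?_ (hx.trans_lt hm)).le
    · exact mem_closedBall_zero_iff.2 (norm_le_one_of_mem_padicBall ha hx)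
    · exact mem_closedBall_zero_iff.2 ha
  exact (basisWeight_le_of_norm_sub_le _ hdist).antisymm
    (basisWeight_le_of_norm_sub_le _ (norm_sub_rev (F x) (F a) ▸ hdist))

theorem measure_exists_norm_pairing_le_one_le (μ : Measure ℚ_[p]) [μ.IsAddLeftInvariant]
    {F : ℚ_[p] → ι → ℚ_[p]} (hFc : ContinuousOn F (closedBall 0 1)) {N : ℕ}
    (hF : ∀ c : ι → ℚ_[p], HasRemezInequality N fun s => ∑ i, c i * F s i) (s : ℕ) {ρ : ℝ}
    (hρ : 0 < ρ)
    (h0 : ∀ q : ι → ℤ, q ≠ 0 → ‖pairing (F 0) q‖ ≤ 1 → Fintype.card ι * ρ ≤ ‖q‖) :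
    μ {x ∈ padicBall 0 0 | ∃ q : ι → ℤ, q ≠ 0 ∧ ‖pairing (F x) q‖ ≤ 1 ∧
        Fintype.card ι * ‖q‖ < ((p : ℝ) ^ (s * N))⁻¹ * ρ} ≤
      exceptionalBound p (Fintype.card ι) * (N * ((p : ℝ≥0∞) ^ s)⁻¹) * μ (padicBall 0 0) := by
  obtain ⟨m₀, hm₀⟩ := exists_latticeWeight_eq_of_mem_padicBall hFc
  have hε : ((p : ℝ) ^ (s * N))⁻¹ ≤ 1 :=
    inv_le_one_of_one_le₀ (one_le_pow₀ one_lt_natCast_prime.le)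
  have hnondiv := measure_not_isProtected_le (μ := μ) (P := SaturatedLattice ι) (m₀ := m₀)
    (ψ := fun G x => latticeWeight G.1 (F x)) (θ := fun G => ρ ^ Module.finrank ℤ G.1)
    (ε := ((p : ℝ) ^ (s * N))⁻¹) (a := 0) (m := 0)
    (card_le_of_isChain_of_strictMono strictMono_finrank_saturatedLattice
      finrank_saturatedLattice_mem_Icc)
    (fun G a m ha ⟨x, hx, hxθ⟩ => measure_latticeWeight_lt_le μ hF s G.1 ha hx hxθ)
    (fun G => hm₀ G.1) (Fintype.card ι) ∅ (by simp) (by simp) (by simp)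
    (fun G _ => ⟨0, mem_padicBall_self 0 0, pow_finrank_le_latticeWeight hρ h0 G.1⟩)
  refine (measure_mono ?_).trans hnondiv
  rintro x ⟨hx, q, hq0, hq, hqlt⟩
  refine ⟨hx, fun hprot => hqlt.not_ge ?_⟩
  rw [Finset.coe_empty] at hprot
  exact mul_le_card_mul_norm_of_isProtected hρ hε hprot hq0 hq

end QuantitativeNondivergence

section ShortVectors

open Filter

variable {ι : Type*} [Fintype ι]

/-- For all large `t`, the integer vectors whose pairing with `Y` has norm at most `p ^ (-t)`
satisfy the lower bound `p ^ ((1 - δ) * t)` on `‖q‖ ^ card ι`, which Dirichlet's theorem shows to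
be optimal up to `δ`. -/
def HasShortVectorBound (δ : ℝ) (Y : ι → ℚ_[p]) : Prop :=
  ∀ᶠ t : ℕ in atTop, ∀ q : ι → ℤ, q ≠ 0 → ‖pairing Y q‖ ≤ ((p : ℝ) ^ t)⁻¹ →
    (p : ℝ) ^ ((t : ℝ) * (1 - δ)) ≤ ‖q‖ ^ Fintype.card ι

lemma HasShortVectorBound.mono {δ δ' : ℝ} {Y : ι → ℚ_[p]} (h : HasShortVectorBound δ Y)
    (hδ : δ ≤ δ') : HasShortVectorBound δ' Y := by
  refine Eventually.mono h fun t ht q hq0 hq => le_trans ?_ (ht q hq0 hq)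
  refine Real.rpow_le_rpow_of_exponent_le one_lt_natCast_prime.le ?_
  gcongr

lemma pairing_ne_zero_of_finite {Y : ι → ℚ_[p]} {v : ℝ}
    (h : {q : ι → ℤ | ‖pairing Y q‖ ≤ ‖q‖ ^ (-v)}.Finite) {q : ι → ℤ} (hq : q ≠ 0) :
    pairing Y q ≠ 0 := by
  refine fun h0 => Set.infinite_of_injective_forall_mem (smul_left_injective ℤ hq) (fun m => ?_) h
  change ‖pairing Y (m • q)‖ ≤ ‖m • q‖ ^ (-v)
  rw [map_smul, h0, smul_zero, norm_zero]
  exact Real.rpow_nonneg (norm_nonneg _) _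

lemma hasShortVectorBound_of_finite {Y : ι → ℚ_[p]} {δ : ℝ} (hδ : 0 ≤ δ)
    (h : {q : ι → ℤ | ‖pairing Y q‖ ≤ ‖q‖ ^ (-(Fintype.card ι * (1 + δ)))}.Finite) :
    HasShortVectorBound δ Y := by
  have hp := one_lt_natCast_prime (p := p)
  have hlarge : ∀ᶠ t : ℕ in atTop, ∀ q ∈ {q : ι → ℤ | ‖pairing Y q‖ ≤
      ‖q‖ ^ (-(Fintype.card ι * (1 + δ)))}, q ≠ 0 → ((p : ℝ) ^ t)⁻¹ < ‖pairing Y q‖ := by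
    refine (eventually_all_finite h).2 fun q _ => ?_
    rcases eq_or_ne q 0 with rfl | hq
    · exact Eventually.of_forall fun t h0 => absurd rfl h0
    · filter_upwards [(tendsto_inv_atTop_zero.comp
        (tendsto_pow_atTop_atTop_of_one_lt hp)).eventually_lt_const
          (norm_pos_iff.2 (pairing_ne_zero_of_finite h hq))] with t ht _ using ht
  filter_upwards [hlarge] with t ht q hq0 hq
  by_contra! hlt
  have hpow : ‖q‖ ^ (Fintype.card ι * (1 + δ)) ≤ (p : ℝ) ^ t :=
    calc ‖q‖ ^ (Fintype.card ι * (1 + δ)) = (‖q‖ ^ Fintype.card ι) ^ (1 + δ) := by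
          rw [Real.rpow_mul (norm_nonneg q), Real.rpow_natCast]
      _ ≤ ((p : ℝ) ^ ((t : ℝ) * (1 - δ))) ^ (1 + δ) := by gcongr
      _ = (p : ℝ) ^ ((t : ℝ) * (1 - δ ^ 2)) := by
          rw [← Real.rpow_mul natCast_prime_pos.le]
          ring_nf
      _ ≤ (p : ℝ) ^ (t : ℝ) := by
          refine Real.rpow_le_rpow_of_exponent_le hp.le (mul_le_of_le_one_right t.cast_nonneg ?_)
          exact sub_le_self 1 (sq_nonneg δ)
      _ = (p : ℝ) ^ t := Real.rpow_natCast _ _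
  refine (ht q ?_ hq0).not_ge hq
  rw [Real.rpow_neg (norm_nonneg q)]
  exact hq.trans (inv_anti₀ (Real.rpow_pos_of_pos (norm_pos_iff.2 hq0) _) hpow)

lemma HasShortVectorBound.finite {Y : ι → ℚ_[p]} {δ v : ℝ} (h : HasShortVectorBound δ Y)
    (hv0 : 0 < v) (hv : Fintype.card ι < (1 - δ) * v) :
    {q : ι → ℤ | ‖pairing Y q‖ ≤ ‖q‖ ^ (-v)}.Finite := by
  have hp := one_lt_natCast_prime (p := p)
  obtain ⟨T, hT⟩ := eventually_atTop.1 h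
  obtain ⟨T', hT'⟩ := exists_nat_gt (Fintype.card ι / ((1 - δ) * v - Fintype.card ι))
  rw [div_lt_iff₀ (sub_pos.2 hv)] at hT'
  refine ((isCompact_closedBall (0 : ι → ℤ)
    (((p : ℝ) ^ (T + T' + 1)) ^ v⁻¹)).finite_of_discrete).subset fun q hq => ?_
  rw [mem_closedBall_zero_iff, Real.le_rpow_inv_iff_of_pos (norm_nonneg q) (by positivity) hv0]
  by_contra! hlarge
  have hq1 : 1 < ‖q‖ ^ v := (one_le_pow₀ hp.le).trans_lt hlarge
  obtain ⟨t, htq, hqt⟩ := exists_nat_pow_near hq1.le hp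
  have hTt : T + T' + 1 < t + 1 := (pow_lt_pow_iff_right₀ hp).1 (hlarge.trans hqt)
  have hq0 : q ≠ 0 := by
    rintro rfl
    rw [norm_zero, Real.zero_rpow hv0.ne'] at hq1
    exact zero_le_one.not_gt hq1
  have hqY : ‖pairing Y q‖ ≤ ((p : ℝ) ^ t)⁻¹ := by
    refine hq.trans ?_
    rw [Real.rpow_neg (norm_nonneg q)]
    exact inv_anti₀ (pow_pos natCast_prime_pos t) htq
  have hexp : (p : ℝ) ^ ((t : ℝ) * (1 - δ) * v) ≤ (p : ℝ) ^ (((t : ℝ) + 1) * Fintype.card ι) :=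
    calc (p : ℝ) ^ ((t : ℝ) * (1 - δ) * v) = ((p : ℝ) ^ ((t : ℝ) * (1 - δ))) ^ v :=
          Real.rpow_mul natCast_prime_pos.le _ _
      _ ≤ (‖q‖ ^ Fintype.card ι) ^ v := by
          gcongr
          exact hT t (by omega) q hq0 hqY
      _ = (‖q‖ ^ v) ^ Fintype.card ι := (Real.rpow_pow_comm (norm_nonneg q) v _).symm
      _ ≤ ((p : ℝ) ^ (t + 1)) ^ Fintype.card ι := by gcongr
      _ = (p : ℝ) ^ (((t : ℝ) + 1) * Fintype.card ι) := by
          rw [← pow_mul, ← Real.rpow_natCast]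
          push_cast
          rfl
  have hle := (Real.rpow_le_rpow_left_iff hp).1 hexp
  have hT't : (T' : ℝ) ≤ t := by exact_mod_cast (by omega : T' ≤ t)
  have := mul_le_mul_of_nonneg_right hT't (sub_pos.2 hv).le
  linarith

lemma continuous_pairing_left (q : ι → ℤ) : Continuous fun Y : ι → ℚ_[p] => pairing Y q := by
  simp only [pairing_apply]
  fun_prop

lemma measurableSet_hasShortVectorBound (δ : ℝ) :
    MeasurableSet {Y : ι → ℚ_[p] | HasShortVectorBound δ Y} := by
  have hclosed (t : ℕ) (q : ι → ℤ) :
      MeasurableSet {Y : ι → ℚ_[p] | ‖pairing Y q‖ ≤ ((p : ℝ) ^ t)⁻¹} :=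
    (isClosed_le (continuous_pairing_left q).norm continuous_const).measurableSet
  simp only [HasShortVectorBound, eventually_atTop, Set.ofPred_exists, Set.ofPred_forall]
  refine .iUnion fun T => .iInter fun t => .iInter fun _ => .iInter fun q => .iInter fun _ => ?_
  exact (hclosed t q).imp (.const _)

end ShortVectors

section VeryWellApproximable

variable {n : ℕ} {y : Fin n → ℚ_[p]}

lemma supNormZ_eq_norm_cons (q₀ : ℤ) (q : Fin n → ℤ) :
    supNormZ q₀ q = ‖(Fin.cons q₀ q : Fin (n + 1) → ℤ)‖ := by
  refine le_antisymm (max_le ?_ (Real.iSup_le (fun i => ?_) (norm_nonneg _))) ?_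
  · rw [← Int.norm_eq_abs]
    exact norm_le_pi_norm (Fin.cons q₀ q : Fin (n + 1) → ℤ) 0
  · rw [← Int.norm_eq_abs]
    exact norm_le_pi_norm (Fin.cons q₀ q : Fin (n + 1) → ℤ) i.succ
  · refine (pi_norm_le_iff_of_nonneg (le_max_of_le_left (abs_nonneg _))).2
      (Fin.cases ?_ fun i => ?_)
    · exact le_max_left _ _
    · exact le_max_of_le_right
        (le_ciSup (f := fun i => |((q i : ℤ) : ℝ)|) (Set.finite_range _).bddAbove i)

lemma pairing_cons_one (y : Fin n → ℚ_[p]) (q : Fin (n + 1) → ℤ) :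
    pairing (Fin.cons 1 y) q = q 0 + ∑ i : Fin n, (q i.succ : ℚ_[p]) * y i := by
  rw [pairing_apply, Fin.sum_univ_succ]
  simp only [Fin.cons_zero, Fin.cons_succ, mul_one]

lemma isVWA_iff_exists_infinite : IsVWA p y ↔ ∃ v : ℝ, (n : ℝ) + 1 < v ∧
    {q | ‖pairing (Fin.cons 1 y : Fin (n + 1) → ℚ_[p]) q‖ ≤ ‖q‖ ^ (-v)}.Infinite := by
  have hset (v : ℝ) : {qq : ℤ × (Fin n → ℤ) | ‖(qq.1 : ℚ_[p]) + ∑ i, (qq.2 i : ℚ_[p]) * y i‖ ≤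
      supNormZ qq.1 qq.2 ^ (-v)}.Infinite ↔
      {q | ‖pairing (Fin.cons 1 y : Fin (n + 1) → ℚ_[p]) q‖ ≤ ‖q‖ ^ (-v)}.Infinite := by
    rw [← Set.infinite_image_iff (Fin.consEquiv fun _ => ℤ).injective.injOn,
      Equiv.image_eq_preimage_symm]
    congr! 1
    ext q
    change ‖(q 0 : ℚ_[p]) + ∑ i : Fin n, (q i.succ : ℚ_[p]) * y i‖ ≤
      supNormZ (q 0) (Fin.tail q) ^ (-v) ↔ _
    rw [supNormZ_eq_norm_cons, Fin.cons_self_tail, ← pairing_cons_one]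
    rfl
  rw [IsVWA, wExp, lt_iSup_iff]
  simp only [lt_iSup_iff, hset]
  refine exists_congr fun v => ⟨?_, ?_⟩
  · rintro ⟨⟨hv, hinf⟩, hlt⟩
    exact ⟨(ENNReal.ofReal_lt_ofReal_iff hv).1 hlt, hinf⟩
  · rintro ⟨hlt, hinf⟩
    have hv : 0 < v := by linarith [n.cast_nonneg (α := ℝ)]
    exact ⟨⟨hv, hinf⟩, (ENNReal.ofReal_lt_ofReal_iff hv).2 hlt⟩

lemma not_isVWA_iff : ¬ IsVWA p y ↔
    ∀ δ > 0, HasShortVectorBound δ (Fin.cons 1 y : Fin (n + 1) → ℚ_[p]) := by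
  rw [isVWA_iff_exists_infinite]
  push Not
  have hn : (0 : ℝ) < n + 1 := n.cast_add_one_pos
  refine ⟨fun h δ hδ => hasShortVectorBound_of_finite hδ.le ?_, fun h v hv => ?_⟩
  · rw [Fintype.card_fin, Nat.cast_succ]
    exact h _ (lt_mul_of_one_lt_right hn (lt_add_of_pos_right 1 hδ))
  · have hv0 : 0 < v := hn.trans hv
    obtain ⟨δ, hδ, hδv⟩ := exists_between (sub_pos.2 ((div_lt_one hv0).2 hv))
    refine (h δ hδ).finite hv0 ?_
    rw [Fintype.card_fin, Nat.cast_succ, ← div_lt_iff₀ hv0]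
    linarith

lemma measurableSet_not_isVWA : MeasurableSet {y : Fin n → ℚ_[p] | ¬ IsVWA p y} := by
  have hset : {y : Fin n → ℚ_[p] | ¬ IsVWA p y} = ⋂ i : ℕ, (fun y => Fin.cons 1 y) ⁻¹'
      {Y : Fin (n + 1) → ℚ_[p] | HasShortVectorBound (1 / ((i : ℝ) + 1)) Y} := by
    ext y
    simp only [Set.mem_iInter, Set.mem_ofPred_eq, Set.mem_preimage, not_isVWA_iff]
    refine ⟨fun h i => h _ Nat.one_div_pos_of_nat, fun h δ hδ => ?_⟩
    obtain ⟨i, hi⟩ := exists_nat_one_div_lt hδ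
    exact (h i).mono hi.le
  rw [hset]
  refine .iInter fun i => (measurableSet_hasShortVectorBound _).preimage ?_
  fun_prop

end VeryWellApproximable

section BorelCantelli

open Filter

lemma ae_eventually_notMem_of_eventually_measure_le {α : Type*} [MeasurableSpace α] {μ : Measure α}
    {E : ℕ → Set α} {u : ℕ → ℝ≥0∞} (hu : ∑' t, u t ≠ ∞) (h : ∀ᶠ t in atTop, μ (E t) ≤ u t) :
    ∀ᵐ x ∂μ, ∀ᶠ t in atTop, x ∉ E t := by
  obtain ⟨T, hT⟩ := eventually_atTop.1 h
  have hsum : ∑' t, μ (E (t + T)) ≠ ∞ := ne_top_of_le_ne_top hu <|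
    (ENNReal.tsum_le_tsum fun t => hT (t + T) (Nat.le_add_left T t)).trans
      (ENNReal.tsum_comp_le_tsum_of_injective (add_left_injective T) u)
  filter_upwards [ae_eventually_notMem hsum] with x hx
  rwa [← map_add_atTop_eq_nat T, eventually_map]

end BorelCantelli

section AlmostEveryPoint

open Filter

lemma eventually_sq_mul_rpow_mul_pow_div_le {b δ : ℝ} (hb : 1 < b) (hδ : 0 < δ) {k N D : ℕ}
    (hk : 0 < k) (hD : 0 < D) (hND : 3 * N * k ≤ D * δ) :
    ∀ᶠ t : ℕ in atTop, (k : ℝ) ^ 2 * b ^ ((t : ℝ) * (1 - δ) / k) * b ^ (t / D * N) ≤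
      b ^ ((t : ℝ) * (1 - δ / 3) / k) := by
  have hb0 : 0 < b := one_pos.trans hb
  have hsq : ∀ᶠ t : ℕ in atTop, (k : ℝ) ^ 2 ≤ b ^ ((t : ℝ) * (δ / (3 * k))) := by
    have htend := tendsto_pow_atTop_atTop_of_one_lt
      (Real.one_lt_rpow hb (show 0 < δ / (3 * k) by positivity))
    filter_upwards [htend.eventually_ge_atTop ((k : ℝ) ^ 2)] with t ht
    rwa [mul_comm, Real.rpow_mul_natCast hb0.le]
  have hdiv (t : ℕ) : b ^ (t / D * N) ≤ b ^ ((t : ℝ) * (δ / (3 * k))) := by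
    rw [← Real.rpow_natCast]
    refine Real.rpow_le_rpow_of_exponent_le hb.le ?_
    calc ((t / D * N : ℕ) : ℝ) ≤ t / D * N := by
          push_cast
          gcongr
          exact Nat.cast_div_le
      _ = t * (N / D) := by ring
      _ ≤ t * (δ / (3 * k)) := by
          refine mul_le_mul_of_nonneg_left ?_ t.cast_nonneg
          rw [div_le_div_iff₀ (by positivity) (by positivity)]
          linarith
  filter_upwards [hsq] with t ht
  calc (k : ℝ) ^ 2 * b ^ ((t : ℝ) * (1 - δ) / k) * b ^ (t / D * N)
      ≤ b ^ ((t : ℝ) * (δ / (3 * k))) * b ^ ((t : ℝ) * (1 - δ) / k) *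
          b ^ ((t : ℝ) * (δ / (3 * k))) := by
        gcongr
        exact hdiv t
    _ = b ^ ((t : ℝ) * (1 - δ / 3) / k) := by
        rw [← Real.rpow_add hb0, ← Real.rpow_add hb0]
        congr 1
        field_simp
        ring

lemma tsum_comp_nat_div (D : ℕ) [NeZero D] (g : ℕ → ℝ≥0∞) :
    ∑' t : ℕ, g (t / D) = D * ∑' m, g m :=
  calc ∑' t : ℕ, g (t / D) = ∑' x : ℕ × Fin D, g x.1 :=
        (Nat.divModEquiv D).tsum_eq fun x => g x.1
    _ = ∑' m, ∑' _ : Fin D, g m := ENNReal.tsum_prod (f := fun m _ => g m)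
    _ = D * ∑' m, g m := by
        simp only [tsum_fintype, Finset.sum_const, Finset.card_univ, Fintype.card_fin,
          nsmul_eq_mul, ENNReal.tsum_mul_left]

lemma tsum_inv_natCast_prime_pow_div_ne_top (D : ℕ) [NeZero D] :
    ∑' t : ℕ, ((p : ℝ≥0∞) ^ (t / D))⁻¹ ≠ ∞ := by
  have hp : (p : ℝ≥0∞)⁻¹ < 1 := ENNReal.inv_lt_one.2 (mod_cast (Fact.out : p.Prime).one_lt)
  rw [tsum_comp_nat_div D fun m => ((p : ℝ≥0∞) ^ m)⁻¹]
  simp only [ENNReal.inv_pow, ENNReal.tsum_geometric]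
  exact ENNReal.mul_ne_top (ENNReal.natCast_ne_top D) (ENNReal.inv_ne_top.2 (tsub_pos_of_lt hp).ne')

variable {ι : Type*} [Fintype ι] {F : ℚ_[p] → ι → ℚ_[p]} {N : ℕ}

lemma norm_pairing_inv_pow_smul_le_one_iff (t : ℕ) (Y : ι → ℚ_[p]) (q : ι → ℤ) :
    ‖pairing (((p : ℚ_[p]) ^ t)⁻¹ • Y) q‖ ≤ 1 ↔ ‖pairing Y q‖ ≤ ((p : ℝ) ^ t)⁻¹ := by
  have hsmul : pairing (((p : ℚ_[p]) ^ t)⁻¹ • Y) q = ((p : ℚ_[p]) ^ t)⁻¹ * pairing Y q := by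
    simp only [pairing_apply, Pi.smul_apply, smul_eq_mul, Finset.mul_sum, mul_left_comm]
  rw [hsmul, norm_mul, norm_inv, norm_pow, Padic.norm_p, inv_pow, inv_inv,
    ← le_inv_mul_iff₀ (pow_pos natCast_prime_pos t), mul_one]

lemma eventually_measure_short_vectors_le [Nonempty ι] (μ : Measure ℚ_[p]) [μ.IsAddLeftInvariant]
    (hFc : ContinuousOn F (closedBall 0 1))
    (hF : ∀ c : ι → ℚ_[p], HasRemezInequality N fun s => ∑ i, c i * F s i)
    {δ : ℝ} (hδ : 0 < δ) {D : ℕ} (hD : 0 < D) (hND : 3 * N * Fintype.card ι ≤ D * δ)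
    (h0 : HasShortVectorBound (δ / 3) (F 0)) :
    ∀ᶠ t : ℕ in atTop, μ {x ∈ padicBall 0 0 | ∃ q : ι → ℤ, q ≠ 0 ∧
        ‖pairing (F x) q‖ ≤ ((p : ℝ) ^ t)⁻¹ ∧ ‖q‖ ^ Fintype.card ι < (p : ℝ) ^ (t * (1 - δ))} ≤
      exceptionalBound p (Fintype.card ι) * (N * ((p : ℝ≥0∞) ^ (t / D))⁻¹) *
        μ (padicBall 0 0) := by
  have hk : 0 < Fintype.card ι := Fintype.card_pos
  have hp := one_lt_natCast_prime (p := p)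
  have hp0 := natCast_prime_pos (p := p)
  have hroot (z : ℝ) : ((p : ℝ) ^ (z / Fintype.card ι)) ^ Fintype.card ι = (p : ℝ) ^ z := by
    rw [← Real.rpow_mul_natCast hp0.le, div_mul_cancel₀ _ (by positivity)]
  filter_upwards [h0, eventually_sq_mul_rpow_mul_pow_div_le hp hδ hk hD hND] with t ht hbound
  have hFt (c : ι → ℚ_[p]) :
      HasRemezInequality N fun s => ∑ i, c i * (((p : ℚ_[p]) ^ t)⁻¹ • F s) i := by
    simpa only [Pi.smul_apply, smul_eq_mul, mul_assoc] using hF fun i => c i * ((p : ℚ_[p]) ^ t)⁻¹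
  have hρ : (0 : ℝ) < (p : ℝ) ^ ((t : ℝ) * (1 - δ / 3) / Fintype.card ι) / Fintype.card ι := by
    positivity
  refine (measure_mono ?_).trans <| measure_exists_norm_pairing_le_one_le μ
    (hFc.const_smul ((p : ℚ_[p]) ^ t)⁻¹) hFt (t / D) hρ fun q hq0 hq => ?_
  · rintro x ⟨hx, q, hq0, hq, hlt⟩
    refine ⟨hx, q, hq0, (norm_pairing_inv_pow_smul_le_one_iff t (F x) q).2 hq, ?_⟩
    rw [← hroot] at hlt
    have hlt' := lt_of_pow_lt_pow_left₀ _ (by positivity) hlt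
    calc (Fintype.card ι : ℝ) * ‖q‖
        < Fintype.card ι * (p : ℝ) ^ ((t : ℝ) * (1 - δ) / Fintype.card ι) := by gcongr
      _ ≤ _ := by
          rw [inv_mul_eq_div, div_div, le_div_iff₀ (by positivity)]
          linarith
  · rw [mul_div_cancel₀ _ (by positivity)]
    refine le_of_pow_le_pow_left₀ hk.ne' (norm_nonneg q) ?_
    rw [hroot]
    exact ht q hq0 ((norm_pairing_inv_pow_smul_le_one_iff t (F 0) q).1 hq)

lemma ae_hasShortVectorBound [Nonempty ι] (μ : Measure ℚ_[p]) [μ.IsAddHaarMeasure]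
    (hFc : ContinuousOn F (closedBall 0 1))
    (hF : ∀ c : ι → ℚ_[p], HasRemezInequality N fun s => ∑ i, c i * F s i)
    {δ : ℝ} (hδ : 0 < δ) (h0 : HasShortVectorBound (δ / 3) (F 0)) :
    ∀ᵐ x ∂μ, ‖x‖ ≤ 1 → HasShortVectorBound δ (F x) := by
  obtain ⟨D, hD⟩ := exists_nat_gt (3 * N * Fintype.card ι / δ)
  have hD0 : 0 < D := Nat.cast_pos.1 ((show (0 : ℝ) ≤ _ by positivity).trans_lt hD)
  rw [div_lt_iff₀ hδ] at hD
  have : NeZero D := ⟨hD0.ne'⟩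
  have hball : μ (padicBall 0 0) ≠ ∞ := (isCompact_closedBall _ _).measure_lt_top.ne
  have hsum : ∑' t : ℕ, exceptionalBound p (Fintype.card ι) * (N * ((p : ℝ≥0∞) ^ (t / D))⁻¹) *
      μ (padicBall 0 0) ≠ ∞ := by
    rw [ENNReal.tsum_mul_right, ENNReal.tsum_mul_left, ENNReal.tsum_mul_left]
    exact ENNReal.mul_ne_top (ENNReal.mul_ne_top (exceptionalBound_ne_top p _)
      (ENNReal.mul_ne_top (ENNReal.natCast_ne_top N)
        (tsum_inv_natCast_prime_pow_div_ne_top D))) hball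
  filter_upwards [ae_eventually_notMem_of_eventually_measure_le hsum
    (eventually_measure_short_vectors_le μ hFc hF hδ hD0 hD.le h0)] with x hx hx1
  refine hx.mono fun t ht q hq0 hq => ?_
  by_contra! hlt
  exact ht ⟨by simpa [mem_padicBall] using hx1, q, hq0, hq, hlt⟩

end AlmostEveryPoint

section Lines

variable {K E : Type*} [NontriviallyNormedField K] [NormedAddCommGroup E] [NormedSpace K E]
  [MeasurableSpace E] [BorelSpace E] [ProperSpace E]

lemma quasiMeasurePreserving_smul_sub (μ : Measure E) [μ.IsAddHaarMeasure] {c : K} (hc : c ≠ 0)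
    (x₀ : E) : Measure.QuasiMeasurePreserving (fun x => c • (x - x₀)) μ μ := by
  let e : E ≃L[K] E := ContinuousLinearEquiv.smulLeft (Units.mk0 c hc)
  have : (μ.map e).IsAddHaarMeasure := e.isAddHaarMeasure_map μ
  have he : Measure.QuasiMeasurePreserving e μ μ :=
    ⟨e.continuous.measurable, Measure.absolutelyContinuous_isAddHaarMeasure _ _⟩
  exact he.comp (measurePreserving_sub_right μ x₀).quasiMeasurePreserving

lemma measurableSet_mem_imp_of_continuousOn {X Y : Type*} [TopologicalSpace X] [MeasurableSpace X]
    [OpensMeasurableSpace X] [TopologicalSpace Y] [MeasurableSpace Y] [BorelSpace Y] {f : X → Y}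
    {S : Set X} (hS : MeasurableSet S) (hf : ContinuousOn f S) {A : Set Y} (hA : MeasurableSet A) :
    MeasurableSet {x | x ∈ S → f x ∈ A} := by
  have hSA : MeasurableSet (Subtype.val '' (S.domRestrict f ⁻¹' Aᶜ)) :=
    hS.subtype_image (hf.domRestrict.measurable hA.compl)
  convert hSA.compl using 1
  ext x
  simp [imp_and]

lemma ae_mem_of_forall_ae_add_smul_mem [IsUltrametricDist K] [ProperSpace K] [MeasurableSpace K]
    [BorelSpace K] (μ : Measure E) [μ.IsAddHaarMeasure] (ν : Measure K) [ν.IsAddHaarMeasure]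
    {A : Set E} (hA : MeasurableSet A) (x₀ : E) {r : ℝ}
    (h : ∀ v, ‖v‖ < r → ∀ᵐ s ∂ν, ‖s‖ ≤ 1 → x₀ + s • v ∈ A) :
    ∀ᵐ x ∂μ, ‖x - x₀‖ < r → x ∈ A := by
  have hmeas : MeasurableSet {z : E × K | ‖z.1‖ < r → ‖z.2‖ ≤ 1 → x₀ + z.2 • z.1 ∈ A} :=
    (isOpen_lt continuous_fst.norm continuous_const).measurableSet.imp <|
      (isClosed_le continuous_snd.norm continuous_const).measurableSet.imp <|
        (by fun_prop : Continuous fun z : E × K => x₀ + z.2 • z.1).measurable hA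
  have hae : ∀ᵐ v ∂μ, ∀ᵐ s ∂ν, ‖v‖ < r → ‖s‖ ≤ 1 → x₀ + s • v ∈ A := by
    refine ae_of_all _ fun v => ?_
    by_cases hv : ‖v‖ < r
    · filter_upwards [h v hv] with s hs _ using hs
    · exact ae_of_all _ fun s hv' => absurd hv' hv
  have hunit : ∃ᵐ s ∂ν, s ∈ ball (1 : K) 1 :=
    frequently_ae_mem_iff.2 (measure_ball_pos ν 1 one_pos).ne'
  obtain ⟨s, hs1, hs⟩ := (hunit.and_eventually ((Measure.ae_ae_comm hmeas).1 hae)).exists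
  have hs_norm : ‖s‖ = 1 := by
    rw [← norm_one (α := K)]
    refine (IsUltrametricDist.norm_eq_of_add_norm_lt_max (y := -1) ?_).trans (norm_neg 1)
    rw [← sub_eq_add_neg, norm_neg, norm_one]
    exact (mem_ball_iff_norm.1 hs1).trans_le (le_max_right _ _)
  have hs0 : s ≠ 0 := norm_ne_zero_iff.1 (hs_norm ▸ one_ne_zero)
  filter_upwards [(quasiMeasurePreserving_smul_sub μ (inv_ne_zero hs0) x₀).ae hs] with x hx hxr
  simpa [smul_inv_smul₀ hs0] using hx (by simpa [norm_smul, hs_norm] using hxr) hs_norm.le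

end Lines

section AnalyticMaps

open Filter Topology

variable {n : ℕ}

lemma evalSeries_single_zero_one {K : Type*} [NormedField K] (s : K) :
    evalSeries (Pi.single 0 1) s = 1 := by
  rw [evalSeries, tsum_eq_single 0 fun j hj => by rw [Pi.single_eq_of_ne hj, zero_mul],
    Pi.single_eq_same, pow_zero, one_mul]

lemma ae_not_isVWA_evalSeries (ν : Measure ℚ_[p]) [ν.IsAddHaarMeasure] {a : Fin n → ℕ → ℚ_[p]}
    (ha : ∀ i, Tendsto (a i) atTop (𝓝 0)) (h0 : ¬ IsVWA p fun i => evalSeries (a i) 0) :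
    ∀ᵐ s ∂ν, ‖s‖ ≤ 1 → ¬ IsVWA p fun i => evalSeries (a i) s := by
  let a₁ : Fin (n + 1) → ℕ → ℚ_[p] := Fin.cons (Pi.single 0 1) a
  have ha₁ : ∀ i, Tendsto (a₁ i) atTop (𝓝 0) := by
    refine Fin.cases (tendsto_const_nhds.congr' ?_) ha
    filter_upwards [eventually_ne_atTop 0] with j hj
    exact (Pi.single_eq_of_ne (M := fun _ => ℚ_[p]) hj 1).symm
  have hcons (s : ℚ_[p]) : (Fin.cons 1 fun i => evalSeries (a i) s : Fin (n + 1) → ℚ_[p]) =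
      fun i => evalSeries (a₁ i) s :=
    funext <| Fin.cases (evalSeries_single_zero_one s).symm fun _ => rfl
  obtain ⟨N, hN⟩ := exists_hasRemezInequality_sum ha₁
  have hcont : ContinuousOn (fun s i => evalSeries (a₁ i) s) (closedBall 0 1) :=
    continuousOn_pi.2 fun i => continuousOn_evalSeries (ha₁ i)
  simp only [not_isVWA_iff, hcons] at h0 ⊢
  have hae (m : ℕ) := ae_hasShortVectorBound ν hcont hN (δ := 1 / ((m : ℝ) + 1))
    Nat.one_div_pos_of_nat (h0 _ (by positivity))
  filter_upwards [ae_all_iff.2 hae] with s hs hs1 δ hδ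
  obtain ⟨m, hm⟩ := exists_nat_one_div_lt hδ
  exact (hs m hs1).mono hm.le

variable {E : Type*} [NormedAddCommGroup E] [NormedSpace ℚ_[p] E] {f : E → Fin n → ℚ_[p]} {x₀ : E}

lemma ae_not_isVWA_add_smul (ν : Measure ℚ_[p]) [ν.IsAddHaarMeasure]
    {P : FormalMultilinearSeries ℚ_[p] E (Fin n → ℚ_[p])} {R : ℝ≥0∞}
    (hP : HasFPowerSeriesOnBall f P x₀ R) (h0 : ¬ IsVWA p (f x₀)) {v : E} (hv : ‖v‖ₑ < R) :
    ∀ᵐ s ∂ν, ‖s‖ ≤ 1 → ¬ IsVWA p (f (x₀ + s • v)) := by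
  let a (i : Fin n) (j : ℕ) : ℚ_[p] := P j (fun _ => v) i
  have hsum {s : ℚ_[p]} (hs : ‖s‖ ≤ 1) (i : Fin n) :
      HasSum (fun j => a i j * s ^ j) (f (x₀ + s • v) i) := by
    have hsv : s • v ∈ eball (0 : E) R := by
      rw [mem_eball_zero_iff, enorm_smul]
      exact (mul_le_of_le_one_left' (enorm_le_coe.2 hs)).trans_lt hv
    simpa [a, mul_comm, ContinuousMultilinearMap.map_smul_univ _ (fun _ => s) fun _ => v] using
      Pi.hasSum.1 (hP.hasSum hsv) i
  have ha (i : Fin n) : Tendsto (a i) atTop (𝓝 0) := by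
    simpa only [one_pow, mul_one] using (hsum norm_one.le i).summable.tendsto_atTop_zero
  have hf {s : ℚ_[p]} (hs : ‖s‖ ≤ 1) : f (x₀ + s • v) = fun i => evalSeries (a i) s :=
    funext fun i => (hsum hs i).tsum_eq.symm
  have h0' : ¬ IsVWA p fun i => evalSeries (a i) 0 := by
    rwa [← hf (norm_zero.trans_le zero_le_one), zero_smul, add_zero]
  filter_upwards [ae_not_isVWA_evalSeries ν ha h0'] with s hs hs1
  rw [hf hs1]
  exact hs hs1

theorem statement1_general [FiniteDimensional ℚ_[p] E] [MeasurableSpace E] [BorelSpace E]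
    (μ : Measure E) [μ.IsAddHaarMeasure] (hf : AnalyticAt ℚ_[p] f x₀) (h0 : ¬ IsVWA p (f x₀)) :
    ∃ V ∈ 𝓝 x₀, ∀ᵐ x ∂μ, x ∈ V → ¬ IsVWA p (f x) := by
  have : ProperSpace E := FiniteDimensional.proper ℚ_[p] E
  obtain ⟨P, R, hP⟩ := hf
  obtain ⟨r, hr0, hrR⟩ := ENNReal.lt_iff_exists_nnreal_btwn.1 hP.r_pos
  have hcont : ContinuousOn f (ball x₀ r) := hP.continuousOn.mono <| by
    rw [← eball_coe]
    exact eball_subset_eball hrR.le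
  have hmeas : MeasurableSet {x | x ∈ ball x₀ r → ¬ IsVWA p (f x)} :=
    measurableSet_mem_imp_of_continuousOn measurableSet_ball hcont measurableSet_not_isVWA
  refine ⟨ball x₀ r, ball_mem_nhds x₀ (by exact_mod_cast hr0), ?_⟩
  have hae := ae_mem_of_forall_ae_add_smul_mem μ Measure.addHaar hmeas x₀ (r := r) fun v hv => by
    have hvR : ‖v‖ₑ < R := (enorm_lt_coe.2 hv).trans hrR
    filter_upwards [ae_not_isVWA_add_smul Measure.addHaar hP h0 hvR] with s hs hs1 _ using hs hs1
  filter_upwards [hae] with x hx hxr using hx (mem_ball_iff_norm.1 hxr) hxr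

lemma measure_sep_pos_of_ae {X : Type*} [TopologicalSpace X] [MeasurableSpace X] {μ : Measure X}
    [μ.IsOpenPosMeasure] {P : X → Prop} {x : X} {U V : Set X} (hU : U ∈ 𝓝 x) (hV : V ∈ 𝓝 x)
    (h : ∀ᵐ y ∂μ, y ∈ V → P y) : 0 < μ {y ∈ U | P y} := by
  refine (μ.measure_pos_of_mem_nhds (inter_mem hU hV)).trans_le (measure_mono_ae ?_)
  filter_upwards [h] with y hy hyUV using ⟨hyUV.1, hy hyUV.2⟩

end AnalyticMaps

end

/-- If `M ⊆ ℚ_p^n` is an analytic submanifold and some `y₀ ∈ M` is not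
very well approximable, then the set of not very well approximable points of `M` has
positive measure w.r.t. the smooth measure class on `M`. -/
theorem statement1 (p : ℕ) [Fact p.Prime] (n d : ℕ) (hn : 1 ≤ n)
    (M : Set (Fin n → ℚ_[p])) (hM : IsAnalyticSubmanifold p d n M)
    (y₀ : Fin n → ℚ_[p]) (hy₀ : y₀ ∈ M) (hw : ¬ IsVWA p y₀) :
    ∃ (U : Set (Fin d → ℚ_[p])) (f : (Fin d → ℚ_[p]) → (Fin n → ℚ_[p])),
      IsChart p d n M U f ∧
      ∀ (μ : Measure (Fin d → ℚ_[p])), μ.IsAddHaarMeasure →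
        0 < μ {x ∈ U | ¬ IsVWA p (f x)} := by
  obtain ⟨U, f, hc, x₀, hx₀, rfl⟩ := hM.2 y₀ hy₀
  refine ⟨U, f, hc, fun μ _ => ?_⟩
  obtain ⟨V, hV, hae⟩ := statement1_general μ (hc.2.1 x₀ hx₀) hw
  exact measure_sep_pos_of_ae (hc.1.mem_nhds hx₀) hV hae

end PadicDioph
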